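/- arXiv:2203.15164 — 6 statements merged into one kernel-verified Lean document; each statement's English description precedes it below -/
import Mathlib

section
/- Let I ⊆ ℝ be an interval and let X : I → M_n(ℝ) be differentiable and satisfy the Lax equation dX/ds = [X(s), π₋(X(s))] for all s ∈ I, where [·,·] is the matrix commutator. Then for every k ∈ ℕ the function s ↦ trace(X(s)^k) is constant on I; in particular the characteristic polynomial of X(s) is independent of s (the flow is isospectral). -/
/-!
Both invariants are differentiated directly; write `B` for `π₋(X)`.

* `A ↦ [A, B]` is a derivation, so the Lax equation `X' = [X, B]` propagates to powers:
  `(X ^ k)' = [X ^ k, B]` (`hasDerivWithinAt_pow_entry`). A commutator has trace zero, so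
  `trace (X ^ k)` has derivative zero on the convex set `I` and is constant there.
* For fixed `x`, the matrix `M = x • 1 - X` satisfies the same equation `M' = [M, B]`. Jacobi's
  formula (`hasDerivWithinAt_det`) gives
  `(det M)' = trace (adj M * (M * B - B * M)) = det M * trace B - det M * trace B = 0`, so
  `det (x • 1 - X)`, the value at `x` of the characteristic polynomial, is constant. Two real
  polynomials with the same values coincide. This avoids passing through Newton's identities.
-/

open Matrix

/-- `π₋(M)`: the strictly lower triangular part of `M`. -/
def lowerPart {n : ℕ} (M : Matrix (Fin n) (Fin n) ℝ) : Matrix (Fin n) (Fin n) ℝ :=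
  fun i j => if (j : ℕ) < (i : ℕ) then M i j else 0

/-- A zero derivative within a convex set, possibly a single point, forces constancy. -/
lemma eq_of_hasDerivWithinAt_zero {I : Set ℝ} (hI : Convex ℝ I) {f : ℝ → ℝ}
    (hf : ∀ s ∈ I, HasDerivWithinAt f 0 I s) {s t : ℝ} (hs : s ∈ I) (ht : t ∈ I) :
    f s = f t := by
  have h := hI.norm_image_sub_le_of_norm_hasDerivWithin_le (C := 0) hf (by simp) ht hs
  rw [zero_mul] at h
  exact sub_eq_zero.mp (norm_le_zero_iff.mp h)

/-- The product rule for matrices, entrywise, so that no matrix norm has to be chosen. -/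
lemma hasDerivWithinAt_mul_entry {n : ℕ} {I : Set ℝ} {s : ℝ}
    {X Y : ℝ → Matrix (Fin n) (Fin n) ℝ} {X' Y' : Matrix (Fin n) (Fin n) ℝ}
    (hX : ∀ p q, HasDerivWithinAt (fun t => X t p q) (X' p q) I s)
    (hY : ∀ p q, HasDerivWithinAt (fun t => Y t p q) (Y' p q) I s) (p q : Fin n) :
    HasDerivWithinAt (fun t => (X t * Y t) p q) ((X' * Y s + X s * Y') p q) I s := by
  simp only [Matrix.add_apply, Matrix.mul_apply, ← Finset.sum_add_distrib]
  exact HasDerivWithinAt.fun_sum fun j _ => (hX p j).mul (hY j q)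

lemma hasDerivWithinAt_pow_entry {n : ℕ} {I : Set ℝ} {s : ℝ}
    {X : ℝ → Matrix (Fin n) (Fin n) ℝ} {B : Matrix (Fin n) (Fin n) ℝ}
    (hX : ∀ p q, HasDerivWithinAt (fun t => X t p q) ((X s * B - B * X s) p q) I s)
    (k : ℕ) (p q : Fin n) :
    HasDerivWithinAt (fun t => (X t ^ k) p q) ((X s ^ k * B - B * X s ^ k) p q) I s := by
  induction k generalizing p q with
  | zero => simpa using hasDerivWithinAt_const s I ((1 : Matrix (Fin n) (Fin n) ℝ) p q)
  | succ k ih =>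
    have h := hasDerivWithinAt_mul_entry ih hX p q
    have e : (X s ^ k * B - B * X s ^ k) * X s + X s ^ k * (X s * B - B * X s)
        = X s ^ (k + 1) * B - B * X s ^ (k + 1) := by
      rw [pow_succ]; noncomm_ring
    rw [e] at h
    simpa only [pow_succ] using h

/-- Jacobi's formula: `(det M)' = trace (adj M * M')`. -/
lemma hasDerivWithinAt_det {n : ℕ} {I : Set ℝ} {s : ℝ}
    {M : ℝ → Matrix (Fin n) (Fin n) ℝ} {M' : Matrix (Fin n) (Fin n) ℝ}
    (hM : ∀ p q, HasDerivWithinAt (fun t => M t p q) (M' p q) I s) :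
    HasDerivWithinAt (fun t => (M t).det) ((M s).adjugate * M').trace I s := by
  -- By Cramer's rule the `i`-th diagonal entry is the determinant of `M` with its `i`-th column
  -- replaced by that of `M'`.
  have hdiag (i : Fin n) : ((M s).adjugate * M') i i
      = ∑ σ : Equiv.Perm (Fin n), ((Equiv.Perm.sign σ : ℤ) : ℝ) *
          ((∏ j ∈ Finset.univ.erase i, M s (σ j) j) * M' (σ i) i) := by
    have h1 : ((M s).adjugate * M') i i = ((M s).updateCol i (fun p => M' p i)).det := by
      rw [← Matrix.cramer_apply, Matrix.cramer_eq_adjugate_mulVec]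
      rfl
    rw [h1, Matrix.det_apply']
    refine Finset.sum_congr rfl fun σ _ => ?_
    rw [← Finset.prod_erase_mul _ _ (Finset.mem_univ i), Matrix.updateCol_self]
    congr 2
    refine Finset.prod_congr rfl fun j hj => ?_
    rw [Matrix.updateCol_ne (Finset.ne_of_mem_erase hj)]
  have htr : ((M s).adjugate * M').trace
      = ∑ σ : Equiv.Perm (Fin n), ((Equiv.Perm.sign σ : ℤ) : ℝ) *
          ∑ i, (∏ j ∈ Finset.univ.erase i, M s (σ j) j) • M' (σ i) i := by
    simp only [Matrix.trace, Matrix.diag_apply, hdiag, smul_eq_mul, Finset.mul_sum]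
    exact Finset.sum_comm
  rw [htr]
  simp only [Matrix.det_apply']
  exact HasDerivWithinAt.fun_sum fun σ _ =>
    (HasDerivWithinAt.fun_finsetProd fun i _ => hM (σ i) i).const_mul _

/-- `[M, B]` is tangent to the level sets of the determinant. -/
lemma trace_adjugate_mul_commutator {n : ℕ} (M B : Matrix (Fin n) (Fin n) ℝ) :
    (M.adjugate * (M * B - B * M)).trace = 0 := by
  rw [mul_sub, Matrix.trace_sub, ← mul_assoc, ← mul_assoc, Matrix.trace_mul_comm _ M,
    ← mul_assoc, Matrix.adjugate_mul, Matrix.mul_adjugate, sub_self]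

/-- the Lax equation dX/ds = [X, π₋(X)] is isospectral:
all power-sum traces, and hence the characteristic polynomial, are constant. -/
theorem statement1 (n : ℕ) (I : Set ℝ) (hIconv : Convex ℝ I)
    (X : ℝ → Matrix (Fin n) (Fin n) ℝ)
    (hX : ∀ s ∈ I, ∀ p q : Fin n,
      HasDerivWithinAt (fun t => X t p q)
        ((X s * lowerPart (X s) - lowerPart (X s) * X s) p q) I s) :
    (∀ k : ℕ, ∀ s ∈ I, ∀ t ∈ I, Matrix.trace ((X s) ^ k) = Matrix.trace ((X t) ^ k)) ∧
    (∀ s ∈ I, ∀ t ∈ I, (X s).charpoly = (X t).charpoly) := by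
  constructor
  · intro k s hs t ht
    refine eq_of_hasDerivWithinAt_zero hIconv (f := fun u => (X u ^ k).trace)
      (fun u hu => ?_) hs ht
    have h0 : (X u ^ k * lowerPart (X u) - lowerPart (X u) * X u ^ k).trace = 0 := by
      rw [Matrix.trace_sub, Matrix.trace_mul_comm, sub_self]
    rw [← h0]
    exact HasDerivWithinAt.fun_sum fun i _ => hasDerivWithinAt_pow_entry (hX u hu) k i i
  · intro s hs t ht
    refine Polynomial.funext fun x => ?_
    rw [Matrix.eval_charpoly, Matrix.eval_charpoly]
    refine eq_of_hasDerivWithinAt_zero hIconv (f := fun u => (Matrix.scalar (Fin n) x - X u).det)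
      (fun u hu => ?_) hs ht
    rw [← trace_adjugate_mul_commutator (Matrix.scalar (Fin n) x - X u) (lowerPart (X u))]
    refine hasDerivWithinAt_det fun p q => ?_
    -- The scalar matrix is central, so `[x • 1 - X, B] = -[X, B]`.
    have e : (Matrix.scalar (Fin n) x - X u) * lowerPart (X u)
          - lowerPart (X u) * (Matrix.scalar (Fin n) x - X u)
        = -(X u * lowerPart (X u) - lowerPart (X u) * X u) := by
      have hc := (Matrix.scalar_commute x (Commute.all x) (lowerPart (X u))).eq
      rw [sub_mul, mul_sub, hc]
      abel
    rw [e]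
    exact (hX u hu p q).const_sub (Matrix.scalar (Fin n) x p q)
end

section
/- Let X₀ be an n×n real lower Hessenberg matrix such that for every t ∈ ℕ all leading principal minors of X₀^t are nonzero, so that X₀^t = Π₋(X₀^t)·Π₊(X₀^t). Define X(t) := Π₋(X₀^t)⁻¹ · X₀ · Π₋(X₀^t) for t ∈ ℕ. Then X(0) = X₀; each X(t) is lower Hessenberg; each X(t) admits an LU factorization X(t) = L(t)·R(t) with L(t) ∈ N₋ and R(t) ∈ B₊; and X(t+1) = L(t)⁻¹·X(t)·L(t) = R(t)·L(t). In other words, X(t) solves the discrete-time full Kostant–Toda (Symes) recursion: factor X(t) = L(t)R(t) and set X(t+1) = R(t)L(t). -/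
/-!
Write `X₀ ^ t = P * R` and `X₀ ^ (t + 1) = Q * S` with `P, Q ∈ N₋` and `R, S ∈ B₊`; these
factorizations exist by `exists_lu` and their unipotent factors are determined by `lu_unique`.
From `X₀ * (P * R) = Q * S` one gets
`X(t) = P⁻¹ * X₀ * P = (P⁻¹ * Q) * (S * R⁻¹)`,
an LU factorization of `X(t)` with `L = P⁻¹ * Q`. Conjugating `X(t)` by this `L` replaces `P` by
`Q`, which gives `X(t + 1)`, and at the same time swaps the two factors. The Hessenberg shape is
preserved because it is stable under multiplication by `N₋` on either side.
At `t = 0` uniqueness forces `Π₋(1) = 1`, so `X(0) = X₀`.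
-/

open Matrix
open scoped Classical

/-- A lower Hessenberg matrix: superdiagonal entries are `1`, entries above the
superdiagonal vanish. -/
def IsLowerHessenberg {n : ℕ} (M : Matrix (Fin n) (Fin n) ℝ) : Prop :=
  (∀ i j : Fin n, (j : ℕ) = (i : ℕ) + 1 → M i j = 1) ∧
  (∀ i j : Fin n, (i : ℕ) + 1 < (j : ℕ) → M i j = 0)

/-- Lower unipotent matrices (members of `N₋`). -/
def IsLowerUnipotent {n : ℕ} (M : Matrix (Fin n) (Fin n) ℝ) : Prop :=
  (∀ i, M i i = 1) ∧ ∀ i j : Fin n, i < j → M i j = 0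

/-- Invertible upper triangular matrices (members of `B₊`). -/
def IsUpperTriReg {n : ℕ} (M : Matrix (Fin n) (Fin n) ℝ) : Prop :=
  (∀ i j : Fin n, j < i → M i j = 0) ∧ IsUnit M.det

/-- The lower unipotent factor `Π₋(g)` of the LU factorization `g = Π₋(g)·Π₊(g)`,
when such a factorization exists (it is then unique). -/
noncomputable def PiMinus {n : ℕ} (g : Matrix (Fin n) (Fin n) ℝ) :
    Matrix (Fin n) (Fin n) ℝ :=
  if h : ∃ p : Matrix (Fin n) (Fin n) ℝ × Matrix (Fin n) (Fin n) ℝ,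
      IsLowerUnipotent p.1 ∧ IsUpperTriReg p.2 ∧ g = p.1 * p.2 then h.choose.1 else 1

/-- The `k`-th leading principal minor of `M` (`= 1` for `k = 0`; junk value `0` for `k > n`). -/
noncomputable def leadMinor {n : ℕ} (M : Matrix (Fin n) (Fin n) ℝ) (k : ℕ) : ℝ :=
  if h : k ≤ n then (M.submatrix (Fin.castLE h) (Fin.castLE h)).det else 0

/-- The discrete-time full Kostant–Toda flow `X(t) = Π₋(X₀^t)⁻¹ · X₀ · Π₋(X₀^t)`. -/
noncomputable def dFToda (n : ℕ) (X₀ : Matrix (Fin n) (Fin n) ℝ) (t : ℕ) :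
    Matrix (Fin n) (Fin n) ℝ :=
  (PiMinus (X₀ ^ t))⁻¹ * X₀ * PiMinus (X₀ ^ t)

/-! ### Lower unipotent and invertible upper triangular matrices -/

lemma IsLowerUnipotent.blockTriangular {n : ℕ} {M : Matrix (Fin n) (Fin n) ℝ}
    (h : IsLowerUnipotent M) : M.BlockTriangular OrderDual.toDual :=
  fun i j hij => h.2 i j hij

lemma IsLowerUnipotent.det_eq {n : ℕ} {M : Matrix (Fin n) (Fin n) ℝ}
    (h : IsLowerUnipotent M) : M.det = 1 := by
  rw [Matrix.det_of_lowerTriangular M h.blockTriangular]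
  simp [h.1]

lemma IsLowerUnipotent.isUnit_det {n : ℕ} {M : Matrix (Fin n) (Fin n) ℝ}
    (h : IsLowerUnipotent M) : IsUnit M.det := by
  rw [h.det_eq]; exact isUnit_one

lemma IsLowerUnipotent.mul {n : ℕ} {M N : Matrix (Fin n) (Fin n) ℝ}
    (hM : IsLowerUnipotent M) (hN : IsLowerUnipotent N) : IsLowerUnipotent (M * N) := by
  refine ⟨fun i => ?_, fun i j hij => hM.blockTriangular.mul hN.blockTriangular hij⟩
  rw [Matrix.mul_apply, Finset.sum_eq_single i]
  · rw [hM.1, hN.1, one_mul]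
  · intro k _ hk
    rcases lt_or_gt_of_ne hk with h | h
    · rw [hN.2 k i h, mul_zero]
    · rw [hM.2 i k h, zero_mul]
  · simp

lemma IsLowerUnipotent.inv {n : ℕ} {M : Matrix (Fin n) (Fin n) ℝ}
    (hM : IsLowerUnipotent M) : IsLowerUnipotent M⁻¹ := by
  have : Invertible M := M.invertibleOfIsUnitDet hM.isUnit_det
  have hI : M⁻¹.BlockTriangular OrderDual.toDual :=
    Matrix.blockTriangular_inv_of_blockTriangular hM.blockTriangular
  refine ⟨fun i => ?_, fun i j hij => hI hij⟩
  have h1 : (M * M⁻¹) i i = 1 := by rw [Matrix.mul_nonsing_inv _ hM.isUnit_det]; simp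
  rw [Matrix.mul_apply, Finset.sum_eq_single i] at h1
  · rwa [hM.1, one_mul] at h1
  · intro k _ hk
    rcases lt_or_gt_of_ne hk with h | h
    · rw [hI (show OrderDual.toDual i < OrderDual.toDual k from h), mul_zero]
    · rw [hM.2 i k h, zero_mul]
  · simp

lemma IsUpperTriReg.blockTriangular {n : ℕ} {M : Matrix (Fin n) (Fin n) ℝ}
    (h : IsUpperTriReg M) : M.BlockTriangular id :=
  fun i j hij => h.1 i j hij

lemma IsUpperTriReg.mul {n : ℕ} {M N : Matrix (Fin n) (Fin n) ℝ}
    (hM : IsUpperTriReg M) (hN : IsUpperTriReg N) : IsUpperTriReg (M * N) :=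
  ⟨fun _ _ hij => hM.blockTriangular.mul hN.blockTriangular hij, by
    rw [Matrix.det_mul]; exact hM.2.mul hN.2⟩

lemma IsUpperTriReg.inv {n : ℕ} {M : Matrix (Fin n) (Fin n) ℝ}
    (hM : IsUpperTriReg M) : IsUpperTriReg M⁻¹ := by
  have : Invertible M := M.invertibleOfIsUnitDet hM.2
  exact ⟨fun _ _ hij => Matrix.blockTriangular_inv_of_blockTriangular hM.blockTriangular hij,
    Matrix.isUnit_nonsing_inv_det M hM.2⟩

lemma isLowerUnipotent_one {n : ℕ} : IsLowerUnipotent (1 : Matrix (Fin n) (Fin n) ℝ) :=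
  ⟨fun i => by simp, fun _ _ hij => Matrix.one_apply_ne hij.ne⟩

lemma isUpperTriReg_one {n : ℕ} : IsUpperTriReg (1 : Matrix (Fin n) (Fin n) ℝ) :=
  ⟨fun _ _ hij => Matrix.one_apply_ne hij.ne', by simp⟩

/-! ### Existence and uniqueness of the LU factorization -/

/-- `N₋ ∩ B₊` is trivial, hence the unipotent factor of an LU factorization is unique. -/
lemma lu_unique {n : ℕ} {L L' R R' : Matrix (Fin n) (Fin n) ℝ}
    (hL : IsLowerUnipotent L) (hL' : IsLowerUnipotent L')
    (hR : IsUpperTriReg R) (hR' : IsUpperTriReg R') (h : L * R = L' * R') : L = L' := by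
  have key : L'⁻¹ * L = R' * R⁻¹ := by
    calc L'⁻¹ * L = L'⁻¹ * (L * R) * R⁻¹ := by
          rw [← Matrix.mul_assoc, Matrix.mul_nonsing_inv_cancel_right _ _ hR.2]
      _ = R' * R⁻¹ := by rw [h, Matrix.nonsing_inv_mul_cancel_left _ _ hL'.isUnit_det]
  have hlow := hL'.inv.mul hL
  have hup := hR'.mul hR.inv
  have h1 : L'⁻¹ * L = 1 := by
    ext i j
    rcases lt_trichotomy i j with hij | rfl | hij
    · rw [hlow.2 i j hij, Matrix.one_apply_ne hij.ne]
    · rw [hlow.1, Matrix.one_apply_eq]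
    · rw [key, hup.1 i j hij, Matrix.one_apply_ne hij.ne']
  calc L = L' * (L'⁻¹ * L) := (Matrix.mul_nonsing_inv_cancel_left _ _ hL'.isUnit_det).symm
    _ = L' := by rw [h1, Matrix.mul_one]

/-- A matrix with nonzero leading principal minors has an LU factorization. Inductively, a
factorization `A = L * R` of the leading block of `[[A, b], [c, d]]` is bordered to
`[[L, 0], [c R⁻¹, 1]] * [[R, L⁻¹ b], [0, d - c R⁻¹ L⁻¹ b]]`. -/
lemma exists_lu {n : ℕ} (M : Matrix (Fin n) (Fin n) ℝ)
    (hM : ∀ k, 1 ≤ k → k ≤ n → leadMinor M k ≠ 0) :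
    ∃ L R : Matrix (Fin n) (Fin n) ℝ, IsLowerUnipotent L ∧ IsUpperTriReg R ∧ M = L * R := by
  induction n with
  | zero =>
    exact ⟨1, 1, isLowerUnipotent_one, isUpperTriReg_one, by ext i; exact i.elim0⟩
  | succ n ih =>
    obtain ⟨L, R, hL, hR, hLR⟩ := ih (M.submatrix Fin.castSucc Fin.castSucc) (by
      intro k hk hkn
      have := hM k hk (by omega)
      rw [leadMinor, dif_pos (by omega)] at this
      rw [leadMinor, dif_pos hkn, Matrix.submatrix_submatrix]
      exact this)
    have hdet : M.det ≠ 0 := by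
      have := hM (n + 1) (by omega) le_rfl
      rw [leadMinor, dif_pos le_rfl] at this
      exact this
    set c : Fin n → ℝ := (fun j => M (Fin.last n) j.castSucc) ᵥ* R⁻¹ with hc
    set b : Fin n → ℝ := L⁻¹ *ᵥ (fun i => M i.castSucc (Fin.last n)) with hb
    let L' : Matrix (Fin (n + 1)) (Fin (n + 1)) ℝ :=
      Matrix.of (Fin.snoc (α := fun _ => Fin (n + 1) → ℝ)
        (fun i => Fin.snoc (α := fun _ => ℝ) (L i) 0) (Fin.snoc (α := fun _ => ℝ) c 1))
    let R' : Matrix (Fin (n + 1)) (Fin (n + 1)) ℝ :=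
      Matrix.of (Fin.snoc (α := fun _ => Fin (n + 1) → ℝ)
        (fun i => Fin.snoc (α := fun _ => ℝ) (R i) (b i))
        (Fin.snoc (α := fun _ => ℝ) 0 (M (Fin.last n) (Fin.last n) - c ⬝ᵥ b)))
    have hcR : c ᵥ* R = fun j => M (Fin.last n) j.castSucc := by
      rw [hc, Matrix.vecMul_vecMul, Matrix.nonsing_inv_mul _ hR.2, Matrix.vecMul_one]
    have hLb : L *ᵥ b = fun i => M i.castSucc (Fin.last n) := by
      rw [hb, Matrix.mulVec_mulVec, Matrix.mul_nonsing_inv _ hL.isUnit_det, Matrix.one_mulVec]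
    have hL' : IsLowerUnipotent L' := by
      constructor
      · intro i
        refine Fin.lastCases ?_ (fun i => ?_) i
        · simp [L']
        · simp [L', hL.1]
      · intro i j
        refine Fin.lastCases ?_ (fun i => ?_) i <;> refine Fin.lastCases ?_ (fun j => ?_) j
        · simp
        · intro h; exact absurd h (Fin.le_last _).not_gt
        · simp [L']
        · intro h; simpa [L'] using hL.2 i j h
    have hmul : M = L' * R' := by
      ext i j
      rw [Matrix.mul_apply, Fin.sum_univ_castSucc]
      refine Fin.lastCases ?_ (fun i => ?_) i <;> refine Fin.lastCases ?_ (fun j => ?_) j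
      · simp [L', R', dotProduct]
      · simpa [L', R', Matrix.vecMul, dotProduct] using (congrFun hcR j).symm
      · simpa [L', R', Matrix.mulVec, dotProduct] using (congrFun hLb i).symm
      · simpa [L', R', Matrix.mul_apply] using congrFun (congrFun hLR i) j
    refine ⟨L', R', hL', ⟨?_, ?_⟩, hmul⟩
    · intro i j
      refine Fin.lastCases ?_ (fun i => ?_) i <;> refine Fin.lastCases ?_ (fun j => ?_) j
      · simp
      · simp [R']
      · intro h; exact absurd h (Fin.le_last _).not_gt
      · intro h; simpa [R'] using hR.1 i j h
    · rw [hmul, Matrix.det_mul, hL'.det_eq, one_mul] at hdet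
      exact hdet.isUnit

lemma PiMinus_spec {n : ℕ} (M : Matrix (Fin n) (Fin n) ℝ)
    (hM : ∀ k, 1 ≤ k → k ≤ n → leadMinor M k ≠ 0) :
    ∃ R, IsLowerUnipotent (PiMinus M) ∧ IsUpperTriReg R ∧ M = PiMinus M * R := by
  obtain ⟨L, R, hL, hR, hLR⟩ := exists_lu M hM
  have h : ∃ p : Matrix (Fin n) (Fin n) ℝ × Matrix (Fin n) (Fin n) ℝ,
      IsLowerUnipotent p.1 ∧ IsUpperTriReg p.2 ∧ M = p.1 * p.2 := ⟨(L, R), hL, hR, hLR⟩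
  rw [PiMinus, dif_pos h]
  exact ⟨h.choose.2, h.choose_spec⟩

/-! ### Hessenberg matrices are stable under multiplication by `N₋` -/

lemma IsLowerHessenberg.mul_left {n : ℕ} {L X : Matrix (Fin n) (Fin n) ℝ}
    (hX : IsLowerHessenberg X) (hL : IsLowerUnipotent L) : IsLowerHessenberg (L * X) := by
  constructor
  · intro i j hij
    rw [Matrix.mul_apply, Finset.sum_eq_single i]
    · rw [hL.1, hX.1 i j hij, one_mul]
    · intro k _ hk
      rcases lt_or_gt_of_ne hk with h | h
      · rw [hX.2 k j (by have : (k : ℕ) < i := h; omega), mul_zero]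
      · rw [hL.2 i k h, zero_mul]
    · simp
  · intro i j hij
    rw [Matrix.mul_apply]
    refine Finset.sum_eq_zero fun k _ => ?_
    rcases le_or_gt k i with h | h
    · rw [hX.2 k j (by have : (k : ℕ) ≤ i := h; omega), mul_zero]
    · rw [hL.2 i k h, zero_mul]

lemma IsLowerHessenberg.mul_right {n : ℕ} {L X : Matrix (Fin n) (Fin n) ℝ}
    (hX : IsLowerHessenberg X) (hL : IsLowerUnipotent L) : IsLowerHessenberg (X * L) := by
  constructor
  · intro i j hij
    rw [Matrix.mul_apply, Finset.sum_eq_single j]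
    · rw [hL.1, hX.1 i j hij, one_mul]
    · intro k _ hk
      rcases lt_or_gt_of_ne hk with h | h
      · rw [hL.2 k j h, mul_zero]
      · rw [hX.2 i k (by have : (j : ℕ) < k := h; omega), zero_mul]
    · simp
  · intro i j hij
    rw [Matrix.mul_apply]
    refine Finset.sum_eq_zero fun k _ => ?_
    rcases lt_or_ge k j with h | h
    · rw [hL.2 k j h, mul_zero]
    · rw [hX.2 i k (by have : (j : ℕ) ≤ k := h; omega), zero_mul]

/-- `X(t) = Π₋(X₀^t)⁻¹·X₀·Π₋(X₀^t)` solves the discrete-time full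
Kostant–Toda (Symes) recursion: factor `X(t) = L(t)·R(t)` and set `X(t+1) = R(t)·L(t)`. -/
theorem statement2 (n : ℕ) (X₀ : Matrix (Fin n) (Fin n) ℝ)
    (hX₀ : IsLowerHessenberg X₀)
    (hminors : ∀ t : ℕ, ∀ k, 1 ≤ k → k ≤ n → leadMinor (X₀ ^ t) k ≠ 0) :
    dFToda n X₀ 0 = X₀ ∧
    (∀ t : ℕ, IsLowerHessenberg (dFToda n X₀ t)) ∧
    (∀ t : ℕ, ∃ L R : Matrix (Fin n) (Fin n) ℝ,
      IsLowerUnipotent L ∧ IsUpperTriReg R ∧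
      dFToda n X₀ t = L * R ∧
      dFToda n X₀ (t + 1) = L⁻¹ * dFToda n X₀ t * L ∧
      dFToda n X₀ (t + 1) = R * L) := by
  refine ⟨?_, fun t => ?_, fun t => ?_⟩
  · obtain ⟨R, hP, hR, hPR⟩ := PiMinus_spec (X₀ ^ 0) (hminors 0)
    have h1 : PiMinus (X₀ ^ 0) = 1 :=
      lu_unique hP isLowerUnipotent_one hR isUpperTriReg_one (by rw [← hPR]; simp)
    rw [dFToda, h1]
    simp
  · obtain ⟨R, hP, -, -⟩ := PiMinus_spec (X₀ ^ t) (hminors t)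
    exact (hX₀.mul_left hP.inv).mul_right hP
  · obtain ⟨R, hP, hR, hPR⟩ := PiMinus_spec (X₀ ^ t) (hminors t)
    obtain ⟨S, hQ, hS, hQS⟩ := PiMinus_spec (X₀ ^ (t + 1)) (hminors (t + 1))
    unfold dFToda
    generalize PiMinus (X₀ ^ t) = P at *
    generalize PiMinus (X₀ ^ (t + 1)) = Q at *
    have hfac : P⁻¹ * X₀ * P = P⁻¹ * Q * (S * R⁻¹) := by
      calc P⁻¹ * X₀ * P = P⁻¹ * (X₀ * (P * R)) * R⁻¹ := by
            rw [← Matrix.mul_assoc X₀, ← Matrix.mul_assoc P⁻¹,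
              Matrix.mul_nonsing_inv_cancel_right _ _ hR.2, Matrix.mul_assoc]
        _ = P⁻¹ * (Q * S) * R⁻¹ := by rw [← hPR, ← hQS, pow_succ']
        _ = P⁻¹ * Q * (S * R⁻¹) := by simp only [Matrix.mul_assoc]
    have hconj : Q⁻¹ * X₀ * Q = (P⁻¹ * Q)⁻¹ * (P⁻¹ * X₀ * P) * (P⁻¹ * Q) := by
      rw [Matrix.mul_inv_rev, Matrix.nonsing_inv_nonsing_inv _ hP.isUnit_det]
      simp only [Matrix.mul_assoc, Matrix.mul_nonsing_inv_cancel_left _ _ hP.isUnit_det]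
    have hLow := hP.inv.mul hQ
    refine ⟨P⁻¹ * Q, S * R⁻¹, hLow, hS.mul hR.inv, hfac, hconj, ?_⟩
    rw [hconj, hfac, Matrix.nonsing_inv_mul_cancel_left _ _ hLow.isUnit_det]
end

section
/- Let n ≥ 2 and M = n(n−1)/2. Call a lower unipotent matrix L ∈ N₋ totally positive if for all subsets I, J ⊆ {1,…,n} with |I| = |J|, either det L'_{I,J} = 0 for every L' ∈ N₋ (the minor vanishes identically on N₋), or det L_{I,J} > 0; write N₋^{>0} for the set of totally positive lower unipotent matrices. Then the map sending a positive triangular array u = (u_i^j)_{1≤i≤j≤n−1} ∈ ℝ_{>0}^M to the product T₁(u)·T₂(u)⋯T_{n−1}(u) is a bijection from ℝ_{>0}^M onto N₋^{>0}. -/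
/-!
Each `T_i(u)` is unipotent lower bidiagonal with subdiagonal `u_1^i, …, u_{n-i}^{n-1}, 0, …, 0`, so
`T_i(u) ⋯ T_{n-1}(u)` differs from the identity only in its upper left block of size `n - i + 1`.
The whole argument is an induction on the size `s` of this block.

*Positivity.* A minor of a lower triangular matrix vanishes unless its `k`-th row index is at least
its `k`-th column index for all `k` (`det_submatrix_eq_zero`). For the remaining minors, left
multiplication by `ℓ_k(a)` with `a > 0` adds to a minor `a` times the minor in which row `k + 1` is
replaced by row `k`. Hence nonnegativity of all minors is kept, positive minors stay positive, and
lowering by one every row that exceeds its column reduces the positivity of a minor of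
`T_i ⋯ T_{n-1}` to that of a minor of `T_{i+1} ⋯ T_{n-1}` (`det_bidiagProd_pos`).

*Uniqueness.* If `X = T Y` with `T` bidiagonal and `Y` equal to the identity below its block, the
rows of `Y` and the entries of `T` are recovered one by one from the bottom row upwards
(`bidiag_mul_injective`).

*Existence.* The same recursion solves `X = T Y` for given `X`. By multiplicativity of the
determinant, the minor of `X` with rows `k + 1, …, s` and columns `J ⊆ {0, …, s - 1}` is
`a_k ⋯ a_{s-1}` times the minor of `Y` with rows `k, …, s - 1` and columns `J`. With
`J = {k, …, s - 1}` this gives `a_k > 0` (`exists_elimination`), and with `J` any interval it shows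
that positivity of the bottom solid minors passes from `X` to `Y` (`exists_bidiag_mul`).
-/

open Matrix

/-- `ℓ_{k+1}(a)` (paper's 1-indexed `ℓ_i` with `i = k+1`): the identity matrix with
the entry `a` inserted in (0-indexed) position `(k+1, k)`. -/
def elemL (n : ℕ) (k : ℕ) (a : ℝ) : Matrix (Fin n) (Fin n) ℝ :=
  fun p q => (if p = q then 1 else 0) + (if (p : ℕ) = k + 1 ∧ (q : ℕ) = k then a else 0)

/-- `T_i(u) = ℓ₁(u_1^i)·ℓ₂(u_2^{i+1})⋯ℓ_{n−i}(u_{n−i}^{n−1})` for a triangular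
array `u` (the value `u i j` is the paper's `u_i^j`). -/
def Tmat (n : ℕ) (u : ℕ → ℕ → ℝ) (i : ℕ) : Matrix (Fin n) (Fin n) ℝ :=
  ((List.range (n - i)).map (fun j => elemL n j (u (j + 1) (i + j)))).prod

/-- `L(u) = T₁(u)·T₂(u)⋯T_{n−1}(u)`. -/
def Lmat (n : ℕ) (u : ℕ → ℕ → ℝ) : Matrix (Fin n) (Fin n) ℝ :=
  ((List.range (n - 1)).map (fun i => Tmat n u (i + 1))).prod

/-- The triangular array `u` vanishes outside the index range `1 ≤ i ≤ j ≤ n−1`. -/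
def OnTriangle (n : ℕ) (u : ℕ → ℕ → ℝ) : Prop :=
  ∀ i j, ¬(1 ≤ i ∧ i ≤ j ∧ j ≤ n - 1) → u i j = 0

/-- The triangular array `u` is positive on the index range `1 ≤ i ≤ j ≤ n−1`. -/
def PosTriangle (n : ℕ) (u : ℕ → ℕ → ℝ) : Prop :=
  ∀ i j, 1 ≤ i → i ≤ j → j ≤ n - 1 → 0 < u i j

/-- The minor of `M` with (ordered) row set `I` and column set `J`. -/
def fminor {n : ℕ} (M : Matrix (Fin n) (Fin n) ℝ) (I J : Finset (Fin n))
    (h : I.card = J.card) : ℝ :=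
  (M.submatrix (fun k : Fin I.card => ((I.orderIsoOfFin rfl) k : Fin n))
    (fun k : Fin I.card => ((J.orderIsoOfFin h.symm) k : Fin n))).det

/-- A lower unipotent matrix is totally positive with respect to `N₋` if every minor
that does not vanish identically on `N₋` is positive. -/
def IsTotallyPositiveLU {n : ℕ} (L : Matrix (Fin n) (Fin n) ℝ) : Prop :=
  IsLowerUnipotent L ∧
  ∀ (I J : Finset (Fin n)) (h : I.card = J.card),
    (∀ L' : Matrix (Fin n) (Fin n) ℝ, IsLowerUnipotent L' → fminor L' I J h = 0) ∨
    0 < fminor L I J h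

/-! ### Bidiagonal factors -/

/-- `ℓ₁(a₀) ⋯ ℓ_s(a_{s-1})`: the unipotent lower bidiagonal matrix with subdiagonal
`a₀, …, a_{s-1}, 0, …, 0`. -/
def bidiag (n s : ℕ) (a : ℕ → ℝ) : Matrix (Fin n) (Fin n) ℝ :=
  ((List.range s).map (fun j => elemL n j (a j))).prod

/-- The product `bidiag s (v s) * ⋯ * bidiag 1 (v 1)`; it agrees with `Lmat` for `s = n - 1`
and `v t j = u (j + 1) (n - t + j)`. -/
def bidiagProd (n : ℕ) (v : ℕ → ℕ → ℝ) : ℕ → Matrix (Fin n) (Fin n) ℝ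
  | 0 => 1
  | s + 1 => bidiag n (s + 1) (v (s + 1)) * bidiagProd n v s

lemma Lmat_eq_bidiagProd (n : ℕ) (u : ℕ → ℕ → ℝ) :
    Lmat n u = bidiagProd n (fun t j => u (j + 1) (n - t + j)) (n - 1) := by
  have key : ∀ t, t ≤ n - 1 →
      ((List.range t).map (fun i => Tmat n u (i + (n - t)))).prod
        = bidiagProd n (fun t j => u (j + 1) (n - t + j)) t := by
    intro t
    induction t with
    | zero => intro _; simp [bidiagProd]
    | succ t ih =>
      intro ht
      rw [List.range_succ_eq_map, List.map_cons, List.prod_cons, bidiagProd, ← ih (by omega),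
        List.map_map]
      congr 1
      · simp only [Tmat, bidiag, Nat.zero_add]
        rw [show n - (n - (t + 1)) = t + 1 by omega]
      · congr 1
        apply List.map_congr_left
        intro i _
        simp only [Function.comp]
        congr 1
        omega
  rw [← key (n - 1) le_rfl, Lmat]
  rcases Nat.eq_zero_or_pos n with rfl | hn
  · simp
  · rw [show n - (n - 1) = 1 by omega]

lemma elemL_mul_apply {n k : ℕ} (hk : k + 1 < n) (a : ℝ) (X : Matrix (Fin n) (Fin n) ℝ)
    (p q : Fin n) :
    (elemL n k a * X) p q = X p q + if (p : ℕ) = k + 1 then a * X ⟨k, by omega⟩ q else 0 := by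
  rw [Matrix.mul_apply]
  simp only [elemL, add_mul, Finset.sum_add_distrib, ite_mul, one_mul, zero_mul]
  congr 1
  · simp
  · by_cases h : (p : ℕ) = k + 1
    · rw [Finset.sum_eq_single ⟨k, by omega⟩]
      · simp [h]
      · intro b _ hb
        rw [if_neg]
        rintro ⟨_, h2⟩
        exact hb (Fin.ext h2)
      · simp
    · simp [h]

lemma bidiag_succ_mul (n s : ℕ) (a : ℕ → ℝ) (X : Matrix (Fin n) (Fin n) ℝ) :
    bidiag n (s + 1) a * X = bidiag n s a * (elemL n s (a s) * X) := by
  simp [bidiag, List.range_succ, Matrix.mul_assoc]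

lemma bidiag_mul_zero {n s : ℕ} (hs : s < n) (a : ℕ → ℝ) (X : Matrix (Fin n) (Fin n) ℝ)
    (p q : Fin n) (h : (p : ℕ) = 0 ∨ s < p) : (bidiag n s a * X) p q = X p q := by
  induction s generalizing X with
  | zero => simp [bidiag]
  | succ s ih =>
    rw [bidiag_succ_mul, ih (by omega) _ (by omega), elemL_mul_apply hs, if_neg (by omega),
      add_zero]

lemma bidiag_mul_succ {n s : ℕ} (hs : s < n) (a : ℕ → ℝ) (X : Matrix (Fin n) (Fin n) ℝ)
    (k : ℕ) (hk : k < s) (q : Fin n) :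
    (bidiag n s a * X) ⟨k + 1, by omega⟩ q
      = X ⟨k + 1, by omega⟩ q + a k * X ⟨k, by omega⟩ q := by
  induction s generalizing X with
  | zero => omega
  | succ s ih =>
    rw [bidiag_succ_mul]
    rcases Nat.lt_succ_iff_lt_or_eq.mp hk with h | rfl
    · rw [ih (by omega) _ h, elemL_mul_apply hs, elemL_mul_apply hs, if_neg (by simp; omega),
        if_neg (by simp; omega)]
      simp
    · rw [bidiag_mul_zero (by omega) _ _ _ _ (by simp), elemL_mul_apply hs]
      simp

/-- The rows of `X` with (0-based) index at least `s` are those of the identity, and `X` is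
lower unipotent. -/
def IsBlock {n : ℕ} (s : ℕ) (X : Matrix (Fin n) (Fin n) ℝ) : Prop :=
  IsLowerUnipotent X ∧ ∀ i j : Fin n, s ≤ i → j ≠ i → X i j = 0

lemma isBlock_bidiagProd {n : ℕ} (v : ℕ → ℕ → ℝ) (s : ℕ) (hs : s < n) :
    IsBlock (s + 1) (bidiagProd n v s) := by
  induction s with
  | zero =>
    refine ⟨⟨by simp [bidiagProd], fun i j h => by simp [bidiagProd, h.ne]⟩, fun i j _ h => ?_⟩
    simp [bidiagProd, h.symm]
  | succ s ih =>
    obtain ⟨⟨h1, h2⟩, h3⟩ := ih (by omega)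
    refine ⟨⟨fun i => ?_, fun i j hij => ?_⟩, fun i j hi hj => ?_⟩
    · by_cases h : (i : ℕ) = 0 ∨ s + 1 < i
      · rw [bidiagProd, bidiag_mul_zero hs _ _ _ _ h, h1]
      · obtain ⟨k, hk⟩ : ∃ k, (i : ℕ) = k + 1 := ⟨i - 1, by omega⟩
        have hkn : k + 1 < n := hk ▸ i.2
        obtain rfl : i = ⟨k + 1, hkn⟩ := Fin.ext hk
        rw [bidiagProd, bidiag_mul_succ hs _ _ _ (by simp at h; omega), h1,
          h2 _ _ (by simp [Fin.lt_def])]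
        simp
    · by_cases h : (i : ℕ) = 0 ∨ s + 1 < i
      · rw [bidiagProd, bidiag_mul_zero hs _ _ _ _ h, h2 _ _ hij]
      · obtain ⟨k, hk⟩ : ∃ k, (i : ℕ) = k + 1 := ⟨i - 1, by omega⟩
        have hkn : k + 1 < n := hk ▸ i.2
        obtain rfl : i = ⟨k + 1, hkn⟩ := Fin.ext hk
        rw [Fin.lt_def] at hij
        rw [bidiagProd, bidiag_mul_succ hs _ _ _ (by simp at h; omega), h2 _ _ hij,
          h2 _ _ (Fin.lt_def.mpr (by simp only at hij ⊢; omega))]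
        simp
    · rw [bidiagProd, bidiag_mul_zero hs _ _ _ _ (by omega), h3 _ _ (by omega) hj]

lemma bidiag_mul_injective {n s : ℕ} (hs : s < n) (a b : ℕ → ℝ)
    (X Y : Matrix (Fin n) (Fin n) ℝ) (hX : IsBlock s X) (hY : IsBlock s Y)
    (ha : ∀ j < s, 0 < a j) (h : bidiag n s a * X = bidiag n s b * Y) :
    (∀ j < s, a j = b j) ∧ X = Y := by
  have key : ∀ d k, k + d = s → ∀ (hk : k < n), (∀ q, X ⟨k, hk⟩ q = Y ⟨k, hk⟩ q) ∧
      ∀ j, k ≤ j → j < s → a j = b j := by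
    intro d
    induction d with
    | zero =>
      intro k hks hk
      refine ⟨fun q => ?_, fun j _ _ => by omega⟩
      by_cases hq : q = ⟨k, hk⟩
      · rw [hq, hX.1.1, hY.1.1]
      · rw [hX.2 _ _ (by simp; omega) hq, hY.2 _ _ (by simp; omega) hq]
    | succ d ih =>
      intro k hks hk
      obtain ⟨h1, h2⟩ := ih (k + 1) (by omega) (by omega)
      have hrow : ∀ q, a k * X ⟨k, hk⟩ q = b k * Y ⟨k, hk⟩ q := by
        intro q
        have := congrFun (congrFun h ⟨k + 1, by omega⟩) q
        rw [bidiag_mul_succ hs _ _ _ (by omega), bidiag_mul_succ hs _ _ _ (by omega), h1] at this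
        linarith
      have hab : a k = b k := by
        have := hrow ⟨k, hk⟩
        rwa [hX.1.1, hY.1.1, mul_one, mul_one] at this
      refine ⟨fun q => ?_, fun j hj hjs => ?_⟩
      · have := hrow q
        rw [← hab] at this
        exact mul_left_cancel₀ (ha k (by omega)).ne' this
      · rcases Nat.eq_or_lt_of_le hj with rfl | hj
        · exact hab
        · exact h2 j hj hjs
  refine ⟨fun j hj => (key s 0 (by omega) (by omega)).2 j (by omega) hj, ?_⟩
  ext i q
  by_cases hi : (i : ℕ) ≤ s
  · exact (key (s - i) i (by omega) i.2).1 q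
  · by_cases hq : q = i
    · rw [hq, hX.1.1, hY.1.1]
    · rw [hX.2 _ _ (by omega) hq, hY.2 _ _ (by omega) hq]

lemma bidiagProd_injective {n : ℕ} (v w : ℕ → ℕ → ℝ) (s : ℕ) (hs : s < n)
    (hv : ∀ t ≤ s, ∀ j < t, 0 < v t j) (h : bidiagProd n v s = bidiagProd n w s) :
    ∀ t ≤ s, ∀ j < t, v t j = w t j := by
  induction s with
  | zero => intro t ht j hj; omega
  | succ s ih =>
    obtain ⟨h1, h2⟩ := bidiag_mul_injective hs _ _ _ _ (isBlock_bidiagProd v s (by omega))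
      (isBlock_bidiagProd w s (by omega)) (hv (s + 1) le_rfl) h
    intro t ht j hj
    rcases Nat.eq_or_lt_of_le ht with rfl | ht
    · exact h1 j hj
    · exact ih (by omega) (fun t ht => hv t (by omega)) h2 t (by omega) j hj

/-! ### Minors of products of bidiagonal matrices -/

/-- All minors of `X` are nonnegative. -/
def IsTNN {n : ℕ} (X : Matrix (Fin n) (Fin n) ℝ) : Prop :=
  ∀ (m : ℕ) (r c : Fin m → Fin n), StrictMono r → StrictMono c → 0 ≤ (X.submatrix r c).det

/-- A minor of a lower triangular matrix vanishes unless its rows dominate its columns: the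
rows `r 0, …, r p` vanish in the columns `c p, c (p + 1), …`. -/
lemma det_submatrix_eq_zero {n m : ℕ} (X : Matrix (Fin n) (Fin n) ℝ)
    (hX : ∀ i j : Fin n, i < j → X i j = 0) (r c : Fin m → Fin n) (hr : StrictMono r)
    (hc : StrictMono c) (p : Fin m) (hp : r p < c p) : (X.submatrix r c).det = 0 := by
  rw [Matrix.det_apply]
  apply Finset.sum_eq_zero
  intro σ _
  have : ∃ j, p ≤ j ∧ σ j ≤ p := by
    by_contra! hcon
    have h1 := Finset.card_le_card_of_injOn (s := Finset.Ici p) (t := Finset.Ioi p) σ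
      (fun j hj => by simpa using hcon j (by simpa using hj)) σ.injective.injOn
    rw [Fin.card_Ici, Fin.card_Ioi] at h1
    have := p.2
    omega
  obtain ⟨j, h1, h2⟩ := this
  rw [Finset.prod_eq_zero (Finset.mem_univ j), smul_zero]
  exact hX _ _ ((hr.monotone h2).trans_lt (hp.trans_le (hc.monotone h1)))

lemma isTNN_one (n : ℕ) : IsTNN (1 : Matrix (Fin n) (Fin n) ℝ) := by
  intro m r c hr hc
  by_cases h : r = c
  · subst h
    rw [Matrix.submatrix_one _ hr.injective, Matrix.det_one]
    exact zero_le_one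
  · obtain ⟨p, hp⟩ := Function.ne_iff.mp h
    rcases lt_or_gt_of_ne hp with hp | hp
    · rw [det_submatrix_eq_zero _ (fun i j h => Matrix.one_apply_ne h.ne) r c hr hc p hp]
    · rw [← Matrix.det_transpose, Matrix.transpose_submatrix, Matrix.transpose_one,
        det_submatrix_eq_zero _ (fun i j h => Matrix.one_apply_ne h.ne) c r hc hr p hp]

lemma det_elemL_mul_of_forall_ne {n m k : ℕ} (hk : k + 1 < n) (a : ℝ)
    (X : Matrix (Fin n) (Fin n) ℝ) (r c : Fin m → Fin n) (h : ∀ p, (r p : ℕ) ≠ k + 1) :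
    ((elemL n k a * X).submatrix r c).det = (X.submatrix r c).det := by
  congr 1
  ext p q
  simp [elemL_mul_apply hk, h p]

lemma det_elemL_mul {n m k : ℕ} (hk : k + 1 < n) (a : ℝ)
    (X : Matrix (Fin n) (Fin n) ℝ) (r c : Fin m → Fin n) (hr : Function.Injective r)
    (p : Fin m) (h : (r p : ℕ) = k + 1) :
    ((elemL n k a * X).submatrix r c).det = (X.submatrix r c).det
      + a * (X.submatrix (Function.update r p ⟨k, by omega⟩) c).det := by
  have e1 : (elemL n k a * X).submatrix r c = (X.submatrix r c).updateRow p
      (X.submatrix r c p + a • (X.submatrix (Function.update r p ⟨k, by omega⟩) c) p) := by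
    ext i q
    by_cases hi : i = p
    · subst hi
      simp [elemL_mul_apply hk, h]
    · have : (r i : ℕ) ≠ k + 1 := fun h' => hi (hr (Fin.ext (h'.trans h.symm)))
      simp [elemL_mul_apply hk, this, hi]
  have e2 : (X.submatrix r c).updateRow p
      ((X.submatrix (Function.update r p ⟨k, by omega⟩) c) p)
      = X.submatrix (Function.update r p ⟨k, by omega⟩) c := by
    ext i q
    by_cases hi : i = p
    · subst hi
      simp
    · simp [hi]
  rw [e1, Matrix.det_updateRow_add, Matrix.det_updateRow_smul, e2, Matrix.updateRow_eq_self]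

/-- Lowering the row `k + 1` to `k` in a minor yields either a repeated row or again an
increasing sequence of rows. -/
lemma det_update_nonneg {n m k : ℕ} (hk : k + 1 < n) (X : Matrix (Fin n) (Fin n) ℝ)
    (hX : IsTNN X) (r c : Fin m → Fin n) (hr : StrictMono r) (hc : StrictMono c)
    (p : Fin m) (h : (r p : ℕ) = k + 1) :
    0 ≤ (X.submatrix (Function.update r p ⟨k, by omega⟩) c).det := by
  by_cases hq : ∃ q, (r q : ℕ) = k
  · obtain ⟨q, hq⟩ := hq
    have hqp : q ≠ p := by rintro rfl; omega
    rw [Matrix.det_zero_of_row_eq hqp]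
    ext j
    have : r q = ⟨k, by omega⟩ := Fin.ext hq
    simp [hqp, this]
  · push Not at hq
    apply hX _ _ _ _ hc
    intro i j hij
    have hij' := hr hij
    rw [Fin.lt_def] at hij' ⊢
    have h1 := hq i
    by_cases hi : i = p
    · subst hi
      rw [Function.update_self, Function.update_of_ne hij.ne']
      simp only
      omega
    · by_cases hj : j = p
      · subst hj
        rw [Function.update_self, Function.update_of_ne hi]
        simp only
        omega
      · rw [Function.update_of_ne hi, Function.update_of_ne hj]
        exact hij'

lemma det_le_elemL_mul {n m k : ℕ} (hk : k + 1 < n) (a : ℝ) (ha : 0 ≤ a)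
    (X : Matrix (Fin n) (Fin n) ℝ) (hX : IsTNN X) (r c : Fin m → Fin n) (hr : StrictMono r)
    (hc : StrictMono c) :
    (X.submatrix r c).det ≤ ((elemL n k a * X).submatrix r c).det := by
  by_cases h : ∃ p, (r p : ℕ) = k + 1
  · obtain ⟨p, hp⟩ := h
    rw [det_elemL_mul hk a X r c hr.injective p hp]
    have := mul_nonneg ha (det_update_nonneg hk X hX r c hr hc p hp)
    linarith
  · push Not at h
    rw [det_elemL_mul_of_forall_ne hk a X r c h]

lemma IsTNN.elemL_mul {n k : ℕ} (hk : k + 1 < n) (a : ℝ) (ha : 0 ≤ a)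
    {X : Matrix (Fin n) (Fin n) ℝ} (hX : IsTNN X) : IsTNN (elemL n k a * X) :=
  fun m r c hr hc => (hX m r c hr hc).trans (det_le_elemL_mul hk a ha X hX r c hr hc)

lemma IsTNN.bidiag_mul {n s : ℕ} (hs : s < n) (a : ℕ → ℝ) (ha : ∀ j < s, 0 < a j)
    {X : Matrix (Fin n) (Fin n) ℝ} (hX : IsTNN X) : IsTNN (bidiag n s a * X) := by
  induction s generalizing X with
  | zero => simpa [bidiag] using hX
  | succ s ih =>
    rw [bidiag_succ_mul]
    exact ih (by omega) (fun j hj => ha j (by omega)) (hX.elemL_mul hs _ (ha s (by omega)).le)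

/-- A positive minor of `X` stays positive after multiplication by a bidiagonal matrix when
some of its rows are raised by one, as long as the raised rows have index at most `s`. -/
lemma det_bidiag_mul_pos {n s m : ℕ} (hs : s < n) (a : ℕ → ℝ) (ha : ∀ j < s, 0 < a j)
    (X : Matrix (Fin n) (Fin n) ℝ) (hX : IsTNN X) (r r' c : Fin m → Fin n)
    (hr : StrictMono r) (hr' : StrictMono r') (hc : StrictMono c)
    (hrr : ∀ p, r' p = r p ∨ ((r' p : ℕ) + 1 = r p ∧ (r p : ℕ) ≤ s))
    (hpos : 0 < (X.submatrix r' c).det) : 0 < ((bidiag n s a * X).submatrix r c).det := by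
  induction s generalizing X r' with
  | zero =>
    have : r' = r := by
      funext p
      rcases hrr p with h | h
      · exact h
      · omega
    subst this
    simpa [bidiag] using hpos
  | succ s ih =>
    rw [bidiag_succ_mul]
    have has := ha s (by omega)
    have hX' := hX.elemL_mul hs (a s) has.le
    by_cases hp : ∃ p, (r p : ℕ) = s + 1 ∧ (r' p : ℕ) = s
    · obtain ⟨p, hp1, hp2⟩ := hp
      have hup : r' = Function.update (Function.update r' p (r p)) p ⟨s, by omega⟩ := by
        rw [Function.update_idem]
        have : (⟨s, by omega⟩ : Fin n) = r' p := Fin.ext hp2.symm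
        rw [this, Function.update_eq_self]
      -- the rows in which only the step from `s` to `s + 1` has been performed
      have hmono : StrictMono (Function.update r' p (r p)) := by
        intro i j hij
        have h1 := hr' hij
        have h2 := hr hij
        rw [Fin.lt_def] at h1 h2 ⊢
        by_cases hi : i = p
        · subst hi
          rw [Function.update_self, Function.update_of_ne hij.ne']
          rcases hrr j with h | h
          · rw [h]; exact h2
          · omega
        · by_cases hj : j = p
          · subst hj
            rw [Function.update_self, Function.update_of_ne hi]
            omega
          · rw [Function.update_of_ne hi, Function.update_of_ne hj]
            exact h1
      refine ih (by omega) (fun j hj => ha j (by omega)) _ hX' (Function.update r' p (r p)) hmono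
        ?_ ?_
      · intro q
        by_cases hq : q = p
        · left; subst hq; simp
        · rw [Function.update_of_ne hq]
          rcases hrr q with h | ⟨h1, h2⟩
          · exact Or.inl h
          · right
            refine ⟨h1, ?_⟩
            have : (r q : ℕ) ≠ s + 1 := fun h => hq (hr.injective (Fin.ext (h.trans hp1.symm)))
            omega
      · rw [det_elemL_mul hs _ _ _ _ hmono.injective p (by simpa using hp1), ← hup]
        have := hX m _ c hmono hc
        have := mul_pos has hpos
        linarith
    · push Not at hp
      refine ih (by omega) (fun j hj => ha j (by omega)) _ hX' r' hr' ?_ ?_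
      · intro q
        rcases hrr q with h | ⟨h1, h2⟩
        · exact Or.inl h
        · right
          refine ⟨h1, ?_⟩
          have := hp q
          omega
      · exact hpos.trans_le (det_le_elemL_mul hs _ has.le X hX r' c hr' hc)

lemma isTNN_bidiagProd {n : ℕ} (v : ℕ → ℕ → ℝ) (s : ℕ) (hs : s < n)
    (hv : ∀ t ≤ s, ∀ j < t, 0 < v t j) : IsTNN (bidiagProd n v s) := by
  induction s with
  | zero => exact isTNN_one n
  | succ s ih =>
    exact (ih (by omega) (fun t ht => hv t (by omega))).bidiag_mul hs _ (hv (s + 1) le_rfl)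

/-- A minor of a partial product is positive as soon as its rows dominate its columns, with
equality for the rows outside the block in which the product differs from the identity. -/
lemma det_bidiagProd_pos {n m : ℕ} (v : ℕ → ℕ → ℝ) (s : ℕ) (hs : s < n)
    (hv : ∀ t ≤ s, ∀ j < t, 0 < v t j) (r c : Fin m → Fin n) (hr : StrictMono r)
    (hc : StrictMono c) (hcr : ∀ p, c p ≤ r p) (hrs : ∀ p, (r p : ℕ) ≤ s ∨ r p = c p) :
    0 < ((bidiagProd n v s).submatrix r c).det := by
  induction s generalizing r with
  | zero =>
    have : r = c := by
      funext p
      rcases hrs p with h | h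
      · have := hcr p
        rw [Fin.le_def] at this
        exact Fin.ext (by omega)
      · exact h
    subst this
    rw [bidiagProd, Matrix.submatrix_one _ hr.injective, Matrix.det_one]
    exact zero_lt_one
  | succ s ih =>
    have hv' : ∀ t ≤ s, ∀ j < t, 0 < v t j := fun t ht => hv t (by omega)
    -- lower by one every row that exceeds the corresponding column
    let r' : Fin m → Fin n := fun p =>
      if c p < r p then ⟨(r p : ℕ) - 1, by omega⟩ else r p
    have hval : ∀ p, (c p < r p ∧ (r' p : ℕ) + 1 = r p) ∨ (c p = r p ∧ r' p = r p) := by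
      intro p
      by_cases h : c p < r p
      · left
        refine ⟨h, ?_⟩
        simp only [r', if_pos h]
        rw [Fin.lt_def] at h
        omega
      · right
        exact ⟨le_antisymm (hcr p) (not_lt.mp h), by simp only [r', if_neg h]⟩
    have hr' : StrictMono r' := by
      intro i j hij
      have h1 := hr hij
      have h2 := hc hij
      have h3 := hcr i
      have h4 := hcr j
      have h5 := hval i
      have h6 := hval j
      simp only [Fin.lt_def, Fin.le_def, Fin.ext_iff] at *
      omega
    refine det_bidiag_mul_pos hs _ (hv (s + 1) le_rfl) _ (isTNN_bidiagProd v s (by omega) hv')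
      r r' c hr hr' hc ?_ (ih (by omega) hv' r' hr' ?_ ?_)
    all_goals
      intro p
      have h1 := hval p
      have h2 := hrs p
      have h3 := hcr p
      simp only [Fin.lt_def, Fin.le_def, Fin.ext_iff] at *
      omega

/-! ### Factoring a matrix with positive solid bottom minors -/

/-- The determinant of rows `x_p = d_p V_p + V_{p+1}` with `V_m = 0`: the coefficient matrix is
upper triangular with diagonal `d`. -/
lemma det_bidiagonal_rows {m : ℕ} (d : ℕ → ℝ) (V : ℕ → Fin m → ℝ) (hV : V m = 0) :
    (Matrix.of fun p q : Fin m => d p * V p q + V (p + 1) q).det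
      = (∏ p : Fin m, d p) * (Matrix.of fun p q : Fin m => V p q).det := by
  have : (Matrix.of fun p q : Fin m => d p * V p q + V (p + 1) q)
      = (Matrix.of fun p q : Fin m =>
          (if p = q then d p else 0) + if (q : ℕ) = p + 1 then (1 : ℝ) else 0)
        * (Matrix.of fun p q : Fin m => V p q) := by
    ext p q
    rw [Matrix.mul_apply]
    simp only [Matrix.of_apply, add_mul, Finset.sum_add_distrib, ite_mul, one_mul, zero_mul]
    congr 1
    · simp
    · by_cases h : (p : ℕ) + 1 < m
      · rw [Finset.sum_eq_single ⟨p + 1, h⟩]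
        · simp
        · intro b _ hb
          rw [if_neg]
          exact fun h' => hb (Fin.ext h')
        · simp
      · have hm : (p : ℕ) + 1 = m := by omega
        rw [hm, hV, Finset.sum_eq_zero]
        · rfl
        · intro b _
          rw [if_neg (by omega)]
  rw [this, Matrix.det_mul, Matrix.det_of_isUpperTriangular]
  · simp
  · intro i j hij
    simp only [id] at hij
    rw [Fin.lt_def] at hij
    have h1 : ¬ i = j := by rintro rfl; omega
    simp only [Matrix.of_apply]
    rw [if_neg h1, if_neg (by omega), add_zero]

/-- One elimination step. For `x` unipotent lower triangular whose solid minors on the bottom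
rows `k, …, s` are positive, the rows of `y` are solved for from the bottom up in
`x (k + 1) = y (k + 1) + a k • y k`; positivity of `a k` comes from the solid minor with rows
`k + 1, …, s` and columns `k, …, s - 1`, which equals `a k ⋯ a (s - 1)`. -/
lemma exists_elimination (s : ℕ) (x : ℕ → ℕ → ℝ) (hx1 : ∀ i, x i i = 1)
    (hx2 : ∀ i j, i < j → x i j = 0)
    (hx : ∀ m k j, k + m = s + 1 → j ≤ k →
      0 < (Matrix.of fun p q : Fin m => x (k + p) (j + q)).det) :
    ∃ (a : ℕ → ℝ) (y : ℕ → ℕ → ℝ), (∀ i, y i i = 1) ∧ (∀ i j, i < j → y i j = 0) ∧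
      (∀ i j, s ≤ i → j ≠ i → y i j = 0) ∧
      ∀ k < s, 0 < a k ∧ ∀ j, x (k + 1) j = a k * y k j + y (k + 1) j := by
  have key : ∀ d k₀, k₀ + d = s → ∃ (a : ℕ → ℝ) (y : ℕ → ℕ → ℝ), (∀ i, y i i = 1) ∧
      (∀ i j, i < j → y i j = 0) ∧ (∀ i j, s ≤ i → j ≠ i → y i j = 0) ∧
      ∀ k, k₀ ≤ k → k < s → 0 < a k ∧ ∀ j, x (k + 1) j = a k * y k j + y (k + 1) j := by
    intro d
    induction d with
    | zero =>
      intro k₀ hk₀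
      refine ⟨fun _ => 0, fun i j => if j = i then 1 else 0, by simp, fun i j h => ?_,
        fun i j _ h => by simp [h], fun k h1 h2 => by omega⟩
      simp [h.ne']
    | succ d ih =>
      intro k hk
      obtain ⟨a, y, hy1, hy2, hy3, hy4⟩ := ih (k + 1) (by omega)
      let z : ℕ → ℝ := fun j => x (k + 1) j - y (k + 1) j
      have hz : ∀ j, k < j → z j = 0 := by
        intro j hj
        rcases Nat.eq_or_lt_of_le (Nat.succ_le_of_lt hj) with rfl | hj
        · simp [z, hx1, hy1]
        · simp [z, hx2 _ _ hj, hy2 _ _ hj]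
      have hpos : 0 < z k := by
        let V : ℕ → Fin (d + 1) → ℝ := fun p q => if p = 0 then z (k + q) else y (k + p) (k + q)
        let e : ℕ → ℝ := fun p => if p = 0 then 1 else a (k + p)
        have h1 := hx (d + 1) (k + 1) k (by omega) (by omega)
        have h2 : (Matrix.of fun p q : Fin (d + 1) => x (k + 1 + p) (k + q))
            = Matrix.of fun p q : Fin (d + 1) => e p * V p q + V (p + 1) q := by
          ext p q
          simp only [Matrix.of_apply, V, e]
          by_cases hp : (p : ℕ) = 0
          · simp [hp, z]
          · rw [if_neg hp, if_neg hp, if_neg (by omega), show k + 1 + (p : ℕ) = k + p + 1 by omega,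
              (hy4 (k + p) (by omega) (by omega)).2, add_assoc k (p : ℕ) 1]
        have h3 : V (d + 1) = 0 := by
          funext q
          simp only [V, Pi.zero_apply]
          rw [if_neg (by omega), hy3 _ _ (by omega) (by omega)]
        rw [h2, det_bidiagonal_rows e V h3, Matrix.det_of_isLowerTriangular] at h1
        · have h4 : ∏ p : Fin (d + 1), (Matrix.of fun p q : Fin (d + 1) => V p q) p p = z k := by
            rw [Fin.prod_univ_succ]
            simp [V, hy1]
          rw [h4] at h1
          refine (pos_iff_pos_of_mul_pos h1).mp (Finset.prod_pos fun p _ => ?_)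
          simp only [e]
          split_ifs with hp
          · exact zero_lt_one
          · exact (hy4 (k + p) (by omega) (by omega)).1
        · intro p q hpq
          have hpq : p < q := hpq
          rw [Fin.lt_def] at hpq
          simp only [Matrix.of_apply, V]
          split_ifs with hp
          · exact hz _ (by omega)
          · exact hy2 _ _ (by omega)
      refine ⟨Function.update a k (z k), Function.update y k (fun j => z j / z k), ?_, ?_, ?_, ?_⟩
      · intro i
        by_cases hi : i = k
        · subst hi; simp [hpos.ne']
        · simp [hi, hy1]
      · intro i j hij
        by_cases hi : i = k
        · subst hi; simp [hz j hij]
        · simp [hi, hy2 i j hij]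
      · intro i j hi hj
        have : i ≠ k := by omega
        simp [this, hy3 i j hi hj]
      · intro i hi1 hi2
        by_cases hi : i = k
        · subst hi
          refine ⟨by simpa using hpos, fun j => ?_⟩
          rw [Function.update_self, Function.update_self, Function.update_of_ne (by omega),
            mul_div_cancel₀ _ hpos.ne']
          simp [z]
        · rw [Function.update_of_ne hi, Function.update_of_ne hi, Function.update_of_ne (by omega)]
          exact hy4 i (by omega) hi2
  obtain ⟨a, y, h1, h2, h3, h4⟩ := key s 0 (by omega)
  exact ⟨a, y, h1, h2, h3, fun k hk => h4 k (by omega) hk⟩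

/-- Extension of a matrix to all of `ℕ × ℕ` by the identity. -/
def natExt {n : ℕ} (X : Matrix (Fin n) (Fin n) ℝ) (i j : ℕ) : ℝ :=
  if h : i < n ∧ j < n then X ⟨i, h.1⟩ ⟨j, h.2⟩ else if i = j then 1 else 0

lemma natExt_of_lt {n : ℕ} (X : Matrix (Fin n) (Fin n) ℝ) {i j : ℕ} (hi : i < n) (hj : j < n) :
    natExt X i j = X ⟨i, hi⟩ ⟨j, hj⟩ := by
  rw [natExt, dif_pos ⟨hi, hj⟩]

/-- The minors of `X` with rows `k, …, s - 1` and as many consecutive columns starting at some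
`j ≤ k` are positive. -/
def IsSolidPos {n : ℕ} (s : ℕ) (X : Matrix (Fin n) (Fin n) ℝ) : Prop :=
  ∀ m k j, k + m = s → j ≤ k →
    0 < (Matrix.of fun p q : Fin m => natExt X (k + p) (j + q)).det

lemma exists_bidiag_mul {n s : ℕ} (hs : s < n) (X : Matrix (Fin n) (Fin n) ℝ)
    (hX : IsBlock (s + 1) X) (hX' : IsSolidPos (s + 1) X) :
    ∃ (a : ℕ → ℝ) (Y : Matrix (Fin n) (Fin n) ℝ), (∀ j < s, 0 < a j) ∧ IsBlock s Y ∧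
      IsSolidPos s Y ∧ X = bidiag n s a * Y := by
  obtain ⟨a, y, hy1, hy2, hy3, hy4⟩ := exists_elimination s (natExt X)
    (fun i => by
      by_cases h : i < n
      · rw [natExt_of_lt X h h, hX.1.1]
      · simp [natExt, h])
    (fun i j hij => by
      by_cases h : i < n ∧ j < n
      · rw [natExt_of_lt X h.1 h.2, hX.1.2 _ _ hij]
      · simp [natExt, h, hij.ne])
    hX'
  refine ⟨a, Matrix.of fun i j => y i j, fun j hj => (hy4 j hj).1,
    ⟨⟨fun i => hy1 i, fun i j hij => hy2 i j hij⟩,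
      fun i j hi hj => hy3 i j hi (fun h => hj (Fin.ext h))⟩, ?_, ?_⟩
  · intro m k j hk hj
    have h1 := hX' m (k + 1) j (by omega) (by omega)
    have h2 : (Matrix.of fun p q : Fin m => natExt X (k + 1 + p) (j + q))
        = Matrix.of fun p q : Fin m => a (k + p) * y (k + p) (j + q) + y (k + (p + 1)) (j + q) := by
      ext p q
      simp only [Matrix.of_apply]
      rw [show k + 1 + (p : ℕ) = k + p + 1 by omega, (hy4 (k + p) (by omega)).2, add_assoc k]
    have h3 : (Matrix.of fun p q : Fin m =>
        natExt (Matrix.of fun i j : Fin n => y i j) (k + p) (j + q))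
        = Matrix.of fun p q : Fin m => y (k + p) (j + q) := by
      ext p q
      simp only [Matrix.of_apply]
      rw [natExt_of_lt _ (by omega) (by omega), Matrix.of_apply]
    rw [h2, det_bidiagonal_rows (fun p => a (k + p)) (fun p q => y (k + p) (j + q)) ?_] at h1
    · rw [h3]
      exact (pos_iff_pos_of_mul_pos h1).mp
        (Finset.prod_pos fun p _ => (hy4 (k + p) (by omega)).1)
    · funext q
      exact hy3 _ _ (by omega) (by omega)
  · ext i q
    by_cases h : (i : ℕ) = 0 ∨ s < i
    · rw [bidiag_mul_zero hs _ _ _ _ h, Matrix.of_apply]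
      by_cases hq : q = i
      · rw [hq, hX.1.1, hy1]
      · have hq' : (q : ℕ) ≠ i := fun h => hq (Fin.ext h)
        rcases h with h | h
        · rw [hX.1.2 _ _ (by rw [Fin.lt_def]; omega), hy2 _ _ (by omega)]
        · rw [hX.2 _ _ (by omega) hq, hy3 _ _ (by omega) hq']
    · obtain ⟨k, hk⟩ : ∃ k, (i : ℕ) = k + 1 := ⟨i - 1, by omega⟩
      have hkn : k + 1 < n := hk ▸ i.2
      obtain rfl : i = ⟨k + 1, hkn⟩ := Fin.ext hk
      have hks : k < s := by simp at h; omega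
      rw [bidiag_mul_succ hs _ _ _ hks]
      have := (hy4 k hks).2 q
      rw [natExt_of_lt _ hkn q.2] at this
      simp only [Matrix.of_apply]
      exact this.trans (add_comm _ _)

lemma bidiagProd_congr {n : ℕ} (v w : ℕ → ℕ → ℝ) (s : ℕ)
    (h : ∀ t ≤ s, ∀ j < t, v t j = w t j) : bidiagProd n v s = bidiagProd n w s := by
  induction s with
  | zero => rfl
  | succ s ih =>
    rw [bidiagProd, bidiagProd, ih (fun t ht => h t (by omega))]
    congr 1
    unfold bidiag
    congr 1
    apply List.map_congr_left
    intro j hj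
    rw [h _ le_rfl j (List.mem_range.mp hj)]

lemma exists_eq_bidiagProd {n : ℕ} (s : ℕ) (hs : s < n) (X : Matrix (Fin n) (Fin n) ℝ)
    (hX : IsBlock (s + 1) X) (hX' : IsSolidPos (s + 1) X) :
    ∃ v : ℕ → ℕ → ℝ, (∀ t ≤ s, ∀ j < t, 0 < v t j) ∧ X = bidiagProd n v s := by
  induction s generalizing X with
  | zero =>
    refine ⟨fun _ _ => 1, fun t ht j hj => by omega, ?_⟩
    ext i j
    rw [bidiagProd]
    by_cases hij : j = i
    · rw [hij, hX.1.1, Matrix.one_apply_eq]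
    · rw [Matrix.one_apply_ne (Ne.symm hij)]
      by_cases hi : (i : ℕ) = 0
      · have : (j : ℕ) ≠ i := fun h => hij (Fin.ext h)
        exact hX.1.2 _ _ (by rw [Fin.lt_def]; omega)
      · exact hX.2 _ _ (by omega) hij
  | succ s ih =>
    obtain ⟨a, Y, ha, hY, hY', rfl⟩ := exists_bidiag_mul hs X hX hX'
    obtain ⟨v, hv, rfl⟩ := ih (by omega) Y hY hY'
    refine ⟨Function.update v (s + 1) a, fun t ht j hj => ?_, ?_⟩
    · by_cases h : t = s + 1
      · subst h
        rw [Function.update_self]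
        exact ha j hj
      · rw [Function.update_of_ne h]
        exact hv t (by omega) j hj
    · rw [bidiagProd, Function.update_self]
      congr 1
      apply bidiagProd_congr
      intro t ht j _
      rw [Function.update_of_ne (by omega)]

/-! ### Totally positive matrices -/

lemma fminor_eq {n m : ℕ} (M : Matrix (Fin n) (Fin n) ℝ) (I J : Finset (Fin n))
    (h : I.card = J.card) (hm : I.card = m) (r c : Fin m → Fin n) (hr : StrictMono r)
    (hc : StrictMono c) (hrI : ∀ p, r p ∈ I) (hcJ : ∀ p, c p ∈ J) :
    fminor M I J h = (M.submatrix r c).det := by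
  subst hm
  rw [Finset.orderEmbOfFin_unique rfl hrI hr, Finset.orderEmbOfFin_unique h.symm hcJ hc]
  rfl

lemma det_Lmat_pos {n m : ℕ} (hn : 2 ≤ n) (u : ℕ → ℕ → ℝ) (hu : PosTriangle n u)
    (r c : Fin m → Fin n) (hr : StrictMono r) (hc : StrictMono c) (hcr : ∀ p, c p ≤ r p) :
    0 < ((Lmat n u).submatrix r c).det := by
  rw [Lmat_eq_bidiagProd]
  exact det_bidiagProd_pos _ (n - 1) (by omega)
    (fun t ht j hj => hu _ _ (by omega) (by omega) (by omega)) r c hr hc hcr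
    (fun p => Or.inl (by omega))

/-- A minor whose rows dominate its columns does not vanish identically on `N₋`, since it is
positive on `Lmat n 1`. -/
lemma IsTotallyPositiveLU.det_pos {n m : ℕ} (hn : 2 ≤ n) {L : Matrix (Fin n) (Fin n) ℝ}
    (hL : IsTotallyPositiveLU L) (r c : Fin m → Fin n) (hr : StrictMono r) (hc : StrictMono c)
    (hcr : ∀ p, c p ≤ r p) : 0 < (L.submatrix r c).det := by
  have hI : (Finset.univ.image r).card = m := by
    rw [Finset.card_image_of_injective _ hr.injective, Finset.card_fin]
  have hJ : (Finset.univ.image c).card = m := by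
    rw [Finset.card_image_of_injective _ hc.injective, Finset.card_fin]
  have heq : ∀ M : Matrix (Fin n) (Fin n) ℝ,
      fminor M (Finset.univ.image r) (Finset.univ.image c) (hI.trans hJ.symm)
        = (M.submatrix r c).det :=
    fun M => fminor_eq M _ _ _ hI r c hr hc (by simp) (by simp)
  rcases hL.2 (Finset.univ.image r) (Finset.univ.image c) (hI.trans hJ.symm) with h | h
  · have h1 := h (Lmat n fun _ _ => 1) (by
      rw [Lmat_eq_bidiagProd]
      exact (isBlock_bidiagProd _ (n - 1) (by omega)).1)
    have h2 := det_Lmat_pos hn (fun _ _ => 1) (fun _ _ _ _ _ => one_pos) r c hr hc hcr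
    rw [heq] at h1
    exact absurd h1 h2.ne'
  · rwa [heq] at h

/-- Lusztig/Berenstein–Fomin–Zelevinsky: the map
`u ↦ T₁(u)·T₂(u)⋯T_{n−1}(u)` is a bijection from positive triangular arrays onto the
totally positive lower unipotent matrices. -/
theorem statement3 (n : ℕ) (hn : 2 ≤ n) :
    (∀ u : ℕ → ℕ → ℝ, OnTriangle n u → PosTriangle n u →
      IsTotallyPositiveLU (Lmat n u)) ∧
    (∀ L : Matrix (Fin n) (Fin n) ℝ, IsTotallyPositiveLU L →
      ∃! u : ℕ → ℕ → ℝ, OnTriangle n u ∧ PosTriangle n u ∧ L = Lmat n u) := by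
  refine ⟨fun u _ hu => ⟨?_, fun I J h => ?_⟩, fun L hL => ?_⟩
  · rw [Lmat_eq_bidiagProd]
    exact (isBlock_bidiagProd _ (n - 1) (by omega)).1
  · have hr : StrictMono (fun k : Fin I.card => ((I.orderIsoOfFin rfl) k : Fin n)) :=
      fun a b hab => (I.orderIsoOfFin rfl).strictMono hab
    have hc : StrictMono (fun k : Fin I.card => ((J.orderIsoOfFin h.symm) k : Fin n)) :=
      fun a b hab => (J.orderIsoOfFin h.symm).strictMono hab
    by_cases hcr : ∀ p, ((J.orderIsoOfFin h.symm) p : Fin n) ≤ ((I.orderIsoOfFin rfl) p : Fin n)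
    · exact Or.inr (det_Lmat_pos hn u hu _ _ hr hc hcr)
    · push Not at hcr
      obtain ⟨p, hp⟩ := hcr
      exact Or.inl fun L' hL' => det_submatrix_eq_zero L' hL'.2 _ _ hr hc p hp
  · have hsolid : IsSolidPos (n - 1 + 1) L := by
      intro m k j hk hj
      have := hL.det_pos hn (fun p : Fin m => ⟨k + p, by omega⟩) (fun q => ⟨j + q, by omega⟩)
        (fun a b hab => Fin.lt_def.mpr (Nat.add_lt_add_left hab _))
        (fun a b hab => Fin.lt_def.mpr (Nat.add_lt_add_left hab _))
        (fun p => by simpa [Fin.le_def] using hj)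
      convert this using 2
      ext p q
      exact natExt_of_lt _ _ _
    obtain ⟨v, hv, hLv⟩ := exists_eq_bidiagProd (n - 1) (by omega) L
      ⟨hL.1, fun i j hi _ => by omega⟩ hsolid
    -- `u i j` is the `i`-th parameter of `T_{j+1-i}`, a bidiagonal matrix with `n-(j+1-i)` parameters
    refine ⟨fun i j => if 1 ≤ i ∧ i ≤ j ∧ j ≤ n - 1 then v (n + i - j - 1) (i - 1) else 0,
      ⟨fun i j h => if_neg h, fun i j h1 h2 h3 => ?_, ?_⟩, ?_⟩
    · simp only
      rw [if_pos ⟨h1, h2, h3⟩]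
      exact hv _ (by omega) _ (by omega)
    · rw [hLv, Lmat_eq_bidiagProd]
      apply bidiagProd_congr
      intro t ht j hj
      rw [if_pos (by omega)]
      congr 1
      omega
    · rintro w ⟨hw1, hw2, hw3⟩
      rw [hLv, Lmat_eq_bidiagProd] at hw3
      have huniq := bidiagProd_injective _ _ (n - 1) (by omega) hv hw3
      funext i j
      split_ifs with h
      · rw [huniq _ (by omega) _ (by omega)]
        congr 1 <;> omega
      · exact hw1 i j h
end

section
/- Let A be an invertible n×n real matrix that is totally nonnegative (every minor of A is ≥ 0). Then A can be written as a finite product A = E₁·E₂⋯E_k of elementary tridiagonal matrices with nonnegative entries, i.e., matrices each of which has all entries nonnegative and differs from the identity matrix in at most one entry, that entry lying in a position (i,i), (i,i+1) or (i+1,i) for some i. -/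
/-!
The proof is Neville elimination. Let `A` be an invertible totally nonnegative matrix whose
first column has its last nonzero entry in row `q = p + 1`. Then `A p 0 > 0`, since otherwise
the `2 × 2` minors on rows `p, q` would force row `p` to vanish, and subtracting
`(A q 0 / A p 0)` times row `p` from row `q` keeps the matrix totally nonnegative
(`whitney_step`). The entry `(q, 0)` is cleared and no zero entry becomes nonzero, so the number
of nonzero entries drops (`exists_step`). Applying this to `A` and to its transpose reduces to a
matrix whose first row and first column vanish off the diagonal, and the remaining block is
handled by induction on the size.

The content of `whitney_step` is the inequality `whitney_ineq`:
`A q 0 * [K ∪ {p} | J] ≤ A p 0 * [K ∪ {q} | J]` for minors of `A`. If all of `K` lies below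
row `q`, this is the expansion of the minor `[{p, q} ∪ K | {0} ∪ J]` along column `0`. Otherwise
let `i` be the largest row of `K` above `p` and `K' = K \ {i}`. The three-term
Plücker relation (`pluecker_minor`) gives
`[K ∪ {q} | J] [K' ∪ {p} | J'] ≥ [K ∪ {p} | J] [K' ∪ {q} | J']` for `J' = J \ {j}`. When
`[K ∪ {p} | J] ≠ 0` some `j` makes `[K' ∪ {p} | J']` positive, by Laplace expansion, so the
inequality for `(K', J')` yields the one for `(K, J)`.
-/

open Matrix

/-- A matrix is totally nonnegative if every minor is nonnegative. -/
def IsTotallyNonneg {n : ℕ} (A : Matrix (Fin n) (Fin n) ℝ) : Prop :=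
  ∀ (I J : Finset (Fin n)) (h : I.card = J.card), 0 ≤ fminor A I J h

/-- An elementary tridiagonal matrix with nonnegative entries: all entries nonnegative,
and it differs from the identity in at most one entry, that entry lying in a position
`(i,i)`, `(i,i+1)` or `(i+1,i)`. -/
def IsElemTridiagNN {n : ℕ} (E : Matrix (Fin n) (Fin n) ℝ) : Prop :=
  (∀ p q : Fin n, 0 ≤ E p q) ∧
  ∃ p q : Fin n,
    ((p : ℕ) = (q : ℕ) ∨ (p : ℕ) + 1 = (q : ℕ) ∨ (q : ℕ) + 1 = (p : ℕ)) ∧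
    ∀ r s : Fin n, ¬(r = p ∧ s = q) → E r s = (1 : Matrix (Fin n) (Fin n) ℝ) r s

/-! ### Total nonnegativity through increasing index maps -/

/-- Total nonnegativity with row and column sets given by strictly increasing maps. -/
def TNN {n : ℕ} (A : Matrix (Fin n) (Fin n) ℝ) : Prop :=
  ∀ (k : ℕ) (r c : Fin k → Fin n), StrictMono r → StrictMono c → 0 ≤ (A.submatrix r c).det

lemma IsTotallyNonneg.tnn {n : ℕ} {A : Matrix (Fin n) (Fin n) ℝ} (h : IsTotallyNonneg A) :
    TNN A := by
  intro k r c hr hc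
  have hI : (Finset.univ.image r).card = k := by
    simp [Finset.card_image_of_injective _ hr.injective]
  have hJ : (Finset.univ.image c).card = k := by
    simp [Finset.card_image_of_injective _ hc.injective]
  have key := h _ _ (hI.trans hJ.symm)
  have e1 : r = (Finset.univ.image r).orderEmbOfFin hI :=
    Finset.orderEmbOfFin_unique hI (fun x => by simp) hr
  have e2 : c = (Finset.univ.image c).orderEmbOfFin hJ :=
    Finset.orderEmbOfFin_unique hJ (fun x => by simp) hc
  unfold fminor at key
  rw [← Matrix.det_submatrix_equiv_self (finCongr hI.symm)] at key
  convert key using 2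
  ext a b
  simp only [submatrix_apply]
  congr 1
  · exact congrFun e1 a
  · exact congrFun e2 b

lemma TNN.transpose {n : ℕ} {A : Matrix (Fin n) (Fin n) ℝ} (h : TNN A) : TNN Aᵀ := by
  intro k r c hr hc
  have := h k c r hc hr
  rwa [← det_transpose, transpose_submatrix] at this

lemma TNN.apply_nonneg {n : ℕ} {A : Matrix (Fin n) (Fin n) ℝ} (h : TNN A) (i j : Fin n) :
    0 ≤ A i j := by
  have := h 1 (fun _ => i) (fun _ => j) (Subsingleton.strictMono _) (Subsingleton.strictMono _)
  simpa using this

/-- Repeated rows or columns make a minor vanish, so weakly increasing index maps suffice. -/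
lemma TNN.of_monotone {n : ℕ} {A : Matrix (Fin n) (Fin n) ℝ} (h : TNN A) {k : ℕ}
    {r c : Fin k → Fin n} (hr : Monotone r) (hc : Monotone c) :
    0 ≤ (A.submatrix r c).det := by
  by_cases hri : Function.Injective r
  · by_cases hci : Function.Injective c
    · exact h k r c (hr.strictMono_of_injective hri) (hc.strictMono_of_injective hci)
    · obtain ⟨a, b, hab, hne⟩ := Function.not_injective_iff.1 hci
      rw [det_zero_of_column_eq hne (fun i => by simp [hab])]
  · obtain ⟨a, b, hab, hne⟩ := Function.not_injective_iff.1 hri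
    rw [det_zero_of_row_eq hne (by ext i; simp [hab])]

lemma submatrix_update_row {n k : ℕ} (A : Matrix (Fin n) (Fin n) ℝ) (r c : Fin k → Fin n)
    (s : Fin k) (p : Fin n) :
    A.submatrix (Function.update r s p) c = (A.submatrix r c).updateRow s (fun j => A p (c j)) := by
  ext i j
  by_cases h : i = s
  · subst h; simp
  · simp [h]

/-! ### The three-term Plücker relation -/

/-- The three-term Plücker relation for the vectors `G a`, `G b`, `p`, `e` completed by the
remaining rows of `G`. It results from applying `v ↦ det (G with rows a, b set to e, v)` to
Cramer's rule `det G • p = ∑ l, det (G with row l set to p) • G l`. -/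
lemma pluecker {m : ℕ} (G : Matrix (Fin m) (Fin m) ℝ) {a b : Fin m} (hab : a ≠ b)
    (p e : Fin m → ℝ) :
    G.det * ((G.updateRow a e).updateRow b p).det =
      (G.updateRow a p).det * ((G.updateRow a e).updateRow b (G a)).det +
      (G.updateRow b p).det * (G.updateRow a e).det := by
  have hc : G.det • p = ∑ l, (G.updateRow l p).det • G l := by
    have h := mulVec_cramer Gᵀ p
    rw [det_transpose] at h
    rw [← h]
    ext j
    simp [mulVec, dotProduct, cramer_apply, updateCol_transpose, det_transpose, mul_comm]
  let φ : (Fin m → ℝ) →ₗ[ℝ] ℝ :=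
    { toFun := fun v => ((G.updateRow a e).updateRow b v).det
      map_add' := fun u v => det_updateRow_add _ _ _ _
      map_smul' := fun t v => by simp [det_updateRow_smul] }
  have h := congrArg φ hc
  rw [map_smul, map_sum] at h
  have hz : ∀ l, l ≠ a ∧ l ≠ b → φ ((G.updateRow l p).det • G l) = 0 := by
    rintro l ⟨hla, hlb⟩
    rw [map_smul]
    have : φ (G l) = 0 := by
      refine det_zero_of_row_eq hlb ?_
      ext j
      simp [updateRow_apply, hla, hlb]
    simp [this]
  rw [Fintype.sum_eq_add a b hab hz, map_smul, map_smul] at h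
  have hb : φ (G b) = (G.updateRow a e).det := by
    change ((G.updateRow a e).updateRow b (G b)).det = _
    congr 1
    ext i j
    by_cases hi : i = b
    · subst hi; simp [updateRow_apply, hab.symm]
    · simp [updateRow_apply, hi]
  rw [hb] at h
  exact h

/-- The Plücker relation with `e` the `j`-th unit vector, which turns half of the determinants
into minors of size one less. -/
lemma pluecker_minor {m : ℕ} (G : Matrix (Fin (m + 1)) (Fin (m + 1)) ℝ) {a b : Fin (m + 1)}
    (hab : a ≠ b) (p : Fin (m + 1) → ℝ) (j : Fin (m + 1)) :
    G.det * ((G.updateRow b p).submatrix a.succAbove j.succAbove).det =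
      (G.updateRow a p).det * ((G.updateRow b (G a)).submatrix a.succAbove j.succAbove).det +
      (G.updateRow b p).det * (G.submatrix a.succAbove j.succAbove).det := by
  have h := pluecker G hab p (Pi.single j 1)
  have hX : ∀ X : Matrix (Fin (m + 1)) (Fin (m + 1)) ℝ, (X.updateRow a (Pi.single j 1)).det =
      (-1) ^ (a + j : ℕ) * (X.submatrix a.succAbove j.succAbove).det := fun X => by
    rw [← adjugate_apply, adjugate_fin_succ_eq_det_submatrix]
  have hcomm : ∀ v, ((G.updateRow a (Pi.single j 1)).updateRow b v) =
      (G.updateRow b v).updateRow a (Pi.single j 1) := fun v => by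
    ext i l
    by_cases hi : i = a
    · subst hi; simp [updateRow_apply, hab]
    · simp [updateRow_apply, hi]
  rw [hcomm, hcomm, hX, hX, hX] at h
  have hs : ((-1 : ℝ) ^ (a + j : ℕ)) ≠ 0 := by simp
  refine mul_left_cancel₀ hs ?_
  linear_combination h

/-! ### One elimination step -/

/-- The minor inequality behind Whitney's reduction: replacing row `q = p + 1` of a minor by
row `p` multiplies it by at most `A p 0 / A q 0`, when column `0` vanishes below row `q`. -/
lemma whitney_ineq {n : ℕ} {A : Matrix (Fin (n + 1)) (Fin (n + 1)) ℝ} (hA : TNN A)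
    {p q : Fin (n + 1)} (hpq : (p : ℕ) + 1 = q) (h0 : ∀ i, q < i → A i 0 = 0)
    (k : ℕ) : ∀ (s : Fin (k + 1)) (r c : Fin (k + 1) → Fin (n + 1)), StrictMono r → StrictMono c →
      r s = q → (∀ l, r l ≠ p) →
      A q 0 * (A.submatrix (Function.update r s p) c).det ≤ A p 0 * (A.submatrix r c).det := by
  have hplt : p < q := by rw [Fin.lt_def]; omega
  have base : ∀ (k : ℕ) (r c : Fin (k + 1) → Fin (n + 1)), StrictMono r → StrictMono c →
      r 0 = q →
      A q 0 * (A.submatrix (Function.update r 0 p) c).det ≤ A p 0 * (A.submatrix r c).det := by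
    intro k r c hr hc hs
    -- `c 0 = 0` is allowed, so the column map `0 :: c` is only weakly increasing.
    have hpos : 0 ≤ (A.submatrix (Fin.cons p r : Fin (k + 2) → Fin (n + 1))
        (Fin.cons 0 c : Fin (k + 2) → Fin (n + 1))).det := by
      refine hA.of_monotone ?_ ?_
      · refine Fin.monotone_iff_le_succ.2 fun i => ?_
        refine Fin.cases ?_ (fun i => ?_) i
        · simpa [hs] using hplt.le
        · rw [← Fin.succ_castSucc, Fin.cons_succ, Fin.cons_succ]
          exact hr.monotone (Fin.castSucc_lt_succ).le
      · refine Fin.monotone_iff_le_succ.2 fun i => ?_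
        refine Fin.cases ?_ (fun i => ?_) i
        · simp
        · rw [← Fin.succ_castSucc, Fin.cons_succ, Fin.cons_succ]
          exact hc.monotone (Fin.castSucc_lt_succ).le
    rw [det_succ_column_zero, Fin.sum_univ_succ, Fin.sum_univ_succ] at hpos
    rw [Finset.sum_eq_zero] at hpos
    · have e1 : (A.submatrix (Fin.cons p r : Fin (k + 2) → Fin (n + 1))
          (Fin.cons 0 c : Fin (k + 2) → Fin (n + 1))).submatrix
            (Fin.succAbove 0) Fin.succ = A.submatrix r c := by
        ext i j; simp
      have e2 : (A.submatrix (Fin.cons p r : Fin (k + 2) → Fin (n + 1))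
          (Fin.cons 0 c : Fin (k + 2) → Fin (n + 1))).submatrix
            (Fin.succAbove (Fin.succ 0)) Fin.succ =
            A.submatrix (Function.update r 0 p) c := by
        ext i j
        refine Fin.cases ?_ (fun i => ?_) i
        · simp
        · simp
      rw [e1, e2] at hpos
      simp [hs] at hpos
      linarith
    · intro i _
      have : q < r i.succ := hs ▸ hr (Fin.succ_pos i)
      simp [h0 _ this]
  induction k with
  | zero =>
    intro s r c hr hc hs hp
    obtain rfl : s = 0 := Fin.eq_zero s
    exact base 0 r c hr hc hs
  | succ k ih =>
    intro s
    refine Fin.cases ?_ (fun t => ?_) s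
    · intro r c hr hc hs hp
      exact base _ r c hr hc hs
    intro r c hr hc hs hp
    have hne : t.castSucc ≠ t.succ := (Fin.castSucc_lt_succ).ne
    have hi : r t.castSucc < p := by
      have h1 : r t.castSucc < q := hs ▸ hr Fin.castSucc_lt_succ
      have h2 := hp t.castSucc
      rw [Fin.lt_def] at *
      rw [Ne, Fin.ext_iff] at h2
      omega
    -- Rows before position `t.castSucc` are above `p`; those after `t.succ` are below `q`.
    have mono1 : Monotone (Function.update r t.castSucc p) := by
      intro x y hxy
      by_cases hx : x = t.castSucc
      · by_cases hy : y = t.castSucc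
        · simp [hx, hy]
        · have : t.succ ≤ y := by
            rw [Fin.le_def] at *; rw [Fin.ext_iff] at *; simp at *; omega
          rw [hx, Function.update_self, Function.update_of_ne hy]
          exact hplt.le.trans (hs ▸ hr.monotone this)
      · by_cases hy : y = t.castSucc
        · rw [hy, Function.update_self, Function.update_of_ne hx]
          exact (hr.monotone (hy ▸ hxy)).trans hi.le
        · rw [Function.update_of_ne hy, Function.update_of_ne hx]
          exact hr.monotone hxy
    have mono2 : Monotone (Function.update r t.succ p) := by
      intro x y hxy
      by_cases hx : x = t.succ
      · by_cases hy : y = t.succ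
        · simp [hx, hy]
        · rw [hx, Function.update_self, Function.update_of_ne hy]
          exact hplt.le.trans (hs ▸ hr.monotone (hx ▸ hxy))
      · by_cases hy : y = t.succ
        · have : x ≤ t.castSucc := by
            rw [Fin.le_def] at *; rw [Fin.ext_iff] at *; simp at *; omega
          rw [hy, Function.update_self, Function.update_of_ne hx]
          exact (hr.monotone this).trans hi.le
        · rw [Function.update_of_ne hy, Function.update_of_ne hx]
          exact hr.monotone hxy
    by_cases hz : (A.submatrix (Function.update r t.succ p) c).det = 0
    · rw [hz, mul_zero]
      exact mul_nonneg (hA.apply_nonneg _ _) (hA _ _ _ hr hc)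
    have hFpos := lt_of_le_of_ne (hA.of_monotone mono2 hc.monotone) (Ne.symm hz)
    obtain ⟨j, hj⟩ : ∃ j : Fin (k + 2), ((A.submatrix (Function.update r t.succ p) c).submatrix
        t.castSucc.succAbove j.succAbove).det ≠ 0 := by
      by_contra! hcon
      refine hz ?_
      rw [det_succ_row _ t.castSucc]
      exact Finset.sum_eq_zero fun j _ => by rw [hcon j, mul_zero]
    have hc' : StrictMono (c ∘ j.succAbove) := hc.comp (Fin.strictMono_succAbove j)
    have hr' : StrictMono (r ∘ t.castSucc.succAbove) := hr.comp (Fin.strictMono_succAbove _)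
    have hstep := ih t _ _ hr' hc' (by simp [hs]) (fun l => hp _)
    have hpl := pluecker_minor (A.submatrix r c) hne (fun j => A p (c j)) j
    have eq1 : Function.update (r ∘ t.castSucc.succAbove) t p =
        Function.update r t.succ p ∘ t.castSucc.succAbove := by
      ext1 x
      by_cases hx : x = t
      · subst hx; simp
      · have : t.castSucc.succAbove x ≠ t.succ := by
          intro h
          rw [← Fin.succAbove_castSucc_self] at h
          exact hx (Fin.succAbove_right_injective h)
        simp [hx, this]
    rw [← submatrix_update_row, ← submatrix_update_row] at hpl
    have hminor : 0 ≤ (((A.submatrix r c).updateRow t.succ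
        ((A.submatrix r c) t.castSucc)).submatrix t.castSucc.succAbove j.succAbove).det := by
      have : (((A.submatrix r c).updateRow t.succ
          ((A.submatrix r c) t.castSucc)).submatrix t.castSucc.succAbove j.succAbove) =
          A.submatrix (r ∘ t.succ.succAbove) (c ∘ j.succAbove) := by
        ext x y
        by_cases hx : x = t
        · subst hx; simp [updateRow_apply]
        · have h2 : t.castSucc.succAbove x = t.succ.succAbove x := by
            rcases lt_or_gt_of_ne hx with h | h
            · rw [Fin.succAbove_of_castSucc_lt _ _ (by simpa using h),
                Fin.succAbove_of_castSucc_lt _ _ (by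
                  rw [Fin.lt_def] at *; simp; omega)]
            · rw [Fin.succAbove_of_le_castSucc _ _ (by simpa using h.le),
                Fin.succAbove_of_le_castSucc _ _ (by
                  rw [Fin.lt_def] at *; rw [Fin.le_def]; simp; omega)]
          simp [updateRow_apply, h2]
      rw [this]
      exact hA _ _ _ (hr.comp (Fin.strictMono_succAbove _)) hc'
    have hF := hA.of_monotone mono1 hc.monotone
    rw [eq1] at hstep
    rw [submatrix_submatrix] at hpl hj
    rw [submatrix_submatrix _ r] at hpl
    have hN : 0 < (A.submatrix (Function.update r t.succ p ∘ t.castSucc.succAbove)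
        (c ∘ j.succAbove)).det :=
      lt_of_le_of_ne (hA.of_monotone (mono2.comp (Fin.strictMono_succAbove _).monotone)
        hc'.monotone) (Ne.symm hj)
    refine le_of_mul_le_mul_right ?_ hN
    have hprod := mul_nonneg (hA.apply_nonneg p 0) (mul_nonneg hF hminor)
    have hstep' := mul_le_mul_of_nonneg_left hstep hFpos.le
    linear_combination hstep' + hprod - A p 0 * hpl

/-- Subtracting the multiple of row `p` that clears the last nonzero entry `(p + 1, 0)` of the
first column preserves total nonnegativity. -/
lemma whitney_step {n : ℕ} {A : Matrix (Fin (n + 1)) (Fin (n + 1)) ℝ} (hA : TNN A)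
    {p q : Fin (n + 1)} (hpq : (p : ℕ) + 1 = q) (h0 : ∀ i, q < i → A i 0 = 0)
    (hp0 : 0 < A p 0) : TNN (transvection q p (-(A q 0 / A p 0)) * A) := by
  intro k r c hr hc
  by_cases hq : ∃ s, r s = q
  · obtain ⟨s, hs⟩ := hq
    have e : (transvection q p (-(A q 0 / A p 0)) * A).submatrix r c =
        (A.submatrix r c).updateRow s
          ((A.submatrix r c) s + (-(A q 0 / A p 0)) • (fun j => A p (c j))) := by
      ext x y
      by_cases hx : x = s
      · subst hx; simp [hs]
      · have : r x ≠ q := fun h => hx (hr.injective (h.trans hs.symm))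
        simp [hx, this]
    rw [e, det_updateRow_add, det_updateRow_smul, updateRow_eq_self, ← submatrix_update_row]
    have key : A q 0 * (A.submatrix (Function.update r s p) c).det ≤
        A p 0 * (A.submatrix r c).det := by
      by_cases hp : ∃ l, r l = p
      · obtain ⟨l, hl⟩ := hp
        have hls : l ≠ s := by
          rintro rfl
          rw [← hs, ← hl] at hpq; omega
        rw [det_zero_of_row_eq hls (by ext i; simp [hls, hl]), mul_zero]
        exact mul_nonneg hp0.le (hA _ _ _ hr hc)
      · push Not at hp
        obtain _ | k := k
        · exact s.elim0
        exact whitney_ineq hA hpq h0 k s r c hr hc hs hp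
    have : A q 0 / A p 0 * (A.submatrix (Function.update r s p) c).det ≤
        (A.submatrix r c).det := by
      rw [div_mul_eq_mul_div, div_le_iff₀ hp0]; linarith
    linarith
  · push Not at hq
    have e : (transvection q p (-(A q 0 / A p 0)) * A).submatrix r c = A.submatrix r c := by
      ext x y
      simp [hq x]
    rw [e]; exact hA _ _ _ hr hc

lemma isElem_transvection {n : ℕ} {p q : Fin n} (hpq : (p : ℕ) + 1 = q) {t : ℝ} (ht : 0 ≤ t) :
    IsElemTridiagNN (transvection q p t) := by
  refine ⟨fun i j => ?_, q, p, Or.inr (Or.inr hpq), fun r s h => ?_⟩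
  · simp only [transvection, Matrix.add_apply, one_apply, single_apply]
    split_ifs <;> linarith
  · simp only [transvection, Matrix.add_apply, single_apply]
    rw [if_neg (fun h' => h ⟨h'.1.symm, h'.2.symm⟩), add_zero]

lemma IsElemTridiagNN.transpose {n : ℕ} {E : Matrix (Fin n) (Fin n) ℝ} (h : IsElemTridiagNN E) :
    IsElemTridiagNN Eᵀ := by
  obtain ⟨h1, p, q, h2, h3⟩ := h
  refine ⟨fun i j => h1 j i, q, p, by tauto, fun r s hrs => ?_⟩
  rw [transpose_apply, h3 s r (by tauto), one_apply, one_apply]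
  simp [eq_comm]

/-- The number of nonzero entries, which decreases under elimination. -/
noncomputable def suppCard {n : ℕ} (A : Matrix (Fin n) (Fin n) ℝ) : ℕ :=
  (Finset.univ.filter fun x : Fin n × Fin n => A x.1 x.2 ≠ 0).card

lemma suppCard_transpose {n : ℕ} (A : Matrix (Fin n) (Fin n) ℝ) : suppCard Aᵀ = suppCard A := by
  refine Finset.card_bij (fun x _ => (x.2, x.1)) ?_ ?_ ?_
  · rintro ⟨a, b⟩ h
    exact Finset.mem_filter.2 ⟨Finset.mem_univ _, (Finset.mem_filter.1 h).2⟩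
  · rintro ⟨a, b⟩ _ ⟨c, d⟩ _ h
    simp at h ⊢; tauto
  · rintro ⟨a, b⟩ h
    exact ⟨(b, a), Finset.mem_filter.2 ⟨Finset.mem_univ _, (Finset.mem_filter.1 h).2⟩, rfl⟩

/-- If the first column is not yet zero below the diagonal, an elementary factor splits off on the
left and leaves an invertible totally nonnegative matrix with fewer nonzero entries. -/
lemma exists_step {n : ℕ} {A : Matrix (Fin (n + 1)) (Fin (n + 1)) ℝ} (hA : TNN A)
    (hdet : A.det ≠ 0) (hcol : ∃ i : Fin n, A i.succ 0 ≠ 0) :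
    ∃ L B, IsElemTridiagNN L ∧ TNN B ∧ B.det ≠ 0 ∧ suppCard B < suppCard A ∧ A = L * B := by
  obtain ⟨i, hi⟩ := hcol
  obtain ⟨i, hi, hmax⟩ := (Finset.univ.filter fun i : Fin n => A i.succ 0 ≠ 0).exists_max_image id
    ⟨i, by simpa using hi⟩
  simp only [Finset.mem_filter, Finset.mem_univ, true_and, id] at hi hmax
  set q := i.succ with hq
  set p := i.castSucc with hp
  have hpq : (p : ℕ) + 1 = q := by simp [hp, hq]
  have hplt : p < q := Fin.castSucc_lt_succ
  have h0 : ∀ l, q < l → A l 0 = 0 := by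
    intro l
    refine Fin.cases (fun h => absurd h (by simp)) (fun l hl => ?_) l
    by_contra h
    exact absurd (hmax l h) (not_le.2 (Fin.succ_lt_succ_iff.1 hl))
  have hq0 : 0 < A q 0 := lt_of_le_of_ne (hA.apply_nonneg _ _) (Ne.symm hi)
  have hp0 : 0 < A p 0 := by
    refine lt_of_le_of_ne (hA.apply_nonneg _ _) fun hz => hdet ?_
    refine det_eq_zero_of_row_eq_zero p fun j => ?_
    have hm := hA.of_monotone (r := ![p, q]) (c := ![0, j])
      (by simp [Fin.monotone_iff_le_succ, hplt.le]) (by simp [Fin.monotone_iff_le_succ])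
    rw [det_fin_two] at hm
    simp [← hz] at hm
    exact le_antisymm (by by_contra! h; nlinarith) (hA.apply_nonneg _ _)
  have hB := whitney_step hA hpq h0 hp0
  have hfac : A = transvection q p (A q 0 / A p 0) *
      (transvection q p (-(A q 0 / A p 0)) * A) := by
    rw [← Matrix.mul_assoc, transvection_mul_transvection_same _ _ hplt.ne']
    simp
  refine ⟨_, _, isElem_transvection hpq (div_nonneg hq0.le hp0.le), hB, ?_, ?_, hfac⟩
  · rwa [det_mul, det_transvection_of_ne _ _ hplt.ne', one_mul]
  · refine Finset.card_lt_card (Finset.ssubset_iff_of_subset ?_ |>.2 ⟨(q, 0), ?_, ?_⟩)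
    · rintro ⟨x, y⟩ hxy
      simp only [Finset.mem_filter, Finset.mem_univ, true_and] at hxy ⊢
      contrapose! hxy
      by_cases hx : x = q
      · subst hx
        -- The new entry is nonnegative, so it cannot be smaller than a zero entry it replaces.
        refine le_antisymm ?_ (hB.apply_nonneg _ _)
        rw [transvection_mul_apply_same, hxy]
        have := mul_nonneg (div_nonneg hq0.le hp0.le) (hA.apply_nonneg p y)
        linarith
      · rwa [transvection_mul_apply_of_ne _ _ _ _ hx]
    · simpa using hi
    · simp [transvection_mul_apply_same, div_mul_cancel₀ _ hp0.ne']

/-! ### Induction on the size -/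

/-- The block matrix `diag(1, B)`. -/
def bordered {n : ℕ} (B : Matrix (Fin n) (Fin n) ℝ) : Matrix (Fin (n + 1)) (Fin (n + 1)) ℝ :=
  of fun i j => Fin.cases (Fin.cases 1 (fun _ => 0) j) (fun i' => Fin.cases 0 (B i') j) i

lemma bordered_one {n : ℕ} : bordered (1 : Matrix (Fin n) (Fin n) ℝ) = 1 := by
  ext i j
  refine Fin.cases ?_ (fun i => ?_) i <;> refine Fin.cases ?_ (fun j => ?_) j <;>
    simp [bordered, one_apply, Fin.succ_ne_zero, (Fin.succ_ne_zero _).symm]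

lemma bordered_mul {n : ℕ} (B C : Matrix (Fin n) (Fin n) ℝ) :
    bordered (B * C) = bordered B * bordered C := by
  ext i j
  refine Fin.cases ?_ (fun i => ?_) i <;> refine Fin.cases ?_ (fun j => ?_) j <;>
    simp [bordered, mul_apply, Fin.sum_univ_succ]

lemma IsElemTridiagNN.bordered {n : ℕ} {E : Matrix (Fin n) (Fin n) ℝ} (h : IsElemTridiagNN E) :
    IsElemTridiagNN (bordered E) := by
  obtain ⟨h1, p, q, h2, h3⟩ := h
  refine ⟨fun i j => ?_, p.succ, q.succ, by simp; omega, fun r s hrs => ?_⟩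
  · refine Fin.cases ?_ (fun i => ?_) i <;> refine Fin.cases ?_ (fun j => ?_) j <;>
      simp [_root_.bordered, h1]
  · rw [← bordered_one]
    revert hrs
    refine Fin.cases ?_ (fun i => ?_) r <;> refine Fin.cases ?_ (fun j => ?_) s <;>
      simp [_root_.bordered]
    intro h
    exact h3 i j (by tauto)

lemma mem_closure_bordered {n : ℕ} {B : Matrix (Fin n) (Fin n) ℝ}
    (h : B ∈ Submonoid.closure {E | IsElemTridiagNN E}) :
    bordered B ∈ Submonoid.closure {E | IsElemTridiagNN E} := by
  induction h using Submonoid.closure_induction with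
  | mem x hx => exact Submonoid.subset_closure (IsElemTridiagNN.bordered hx)
  | one => rw [bordered_one]; exact one_mem _
  | mul x y _ _ hx hy => rw [bordered_mul]; exact mul_mem hx hy

lemma mem_closure_of_tnn (n : ℕ) : ∀ A : Matrix (Fin n) (Fin n) ℝ, TNN A → A.det ≠ 0 →
    A ∈ Submonoid.closure {E | IsElemTridiagNN E} := by
  induction n with
  | zero =>
    intro A _ _
    rw [Subsingleton.elim A 1]
    exact one_mem _
  | succ n ih =>
    intro A
    induction hN : suppCard A using Nat.strong_induction_on generalizing A with
    | _ N IH =>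
    intro hA hdet
    by_cases hcol : ∃ i : Fin n, A i.succ 0 ≠ 0
    · obtain ⟨L, B, hL, hB, hBdet, hlt, rfl⟩ := exists_step hA hdet hcol
      exact mul_mem (Submonoid.subset_closure hL) (IH _ (hN ▸ hlt) B rfl hB hBdet)
    by_cases hrow : ∃ j : Fin n, A 0 j.succ ≠ 0
    · obtain ⟨L, B, hL, hB, hBdet, hlt, hfac⟩ :=
        exists_step hA.transpose (by rwa [det_transpose]) hrow
      have hfac' : A = Bᵀ * Lᵀ := by rw [← transpose_mul, ← hfac, transpose_transpose]
      rw [suppCard_transpose, hN, ← suppCard_transpose B] at hlt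
      rw [hfac']
      exact mul_mem (IH _ hlt Bᵀ rfl hB.transpose (by rwa [det_transpose]))
        (Submonoid.subset_closure hL.transpose)
    push Not at hcol hrow
    have hfac : A = diagonal (Function.update 1 0 (A 0 0)) *
        bordered (A.submatrix Fin.succ Fin.succ) := by
      ext i j
      rw [diagonal_mul]
      refine Fin.cases ?_ (fun i => ?_) i <;> refine Fin.cases ?_ (fun j => ?_) j <;>
        simp [bordered, hcol, hrow]
    have hdet' : (A.submatrix Fin.succ Fin.succ).det ≠ 0 := by
      intro h
      apply hdet
      rw [det_succ_column_zero, Fin.sum_univ_succ]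
      simp [hcol, h]
    have hsub : TNN (A.submatrix Fin.succ Fin.succ) := fun k r c hr hc => by
      rw [submatrix_submatrix]
      exact hA k _ _ ((Fin.strictMono_succ).comp hr) ((Fin.strictMono_succ).comp hc)
    rw [hfac]
    refine mul_mem (Submonoid.subset_closure ⟨fun i j => ?_, 0, 0, Or.inl rfl, fun r s h => ?_⟩)
      (mem_closure_bordered (ih _ hsub hdet'))
    · by_cases hij : i = j
      · subst hij
        refine Fin.cases ?_ (fun i => ?_) i
        · simpa using hA.apply_nonneg 0 0
        · simp
      · simp [hij]
    · by_cases hrs : r = s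
      · subst hrs
        have : r ≠ 0 := fun h' => h ⟨h', h'⟩
        simp [this]
      · simp [hrs]

/-- Loewner–Whitney: every invertible totally nonnegative matrix is a
finite product of elementary tridiagonal matrices with nonnegative entries. -/
theorem statement4 (n : ℕ) (A : Matrix (Fin n) (Fin n) ℝ)
    (hinv : IsUnit A.det) (hTNN : IsTotallyNonneg A) :
    ∃ (k : ℕ) (E : Fin k → Matrix (Fin n) (Fin n) ℝ),
      (∀ m : Fin k, IsElemTridiagNN (E m)) ∧ A = (List.ofFn E).prod := by
  obtain ⟨l, hl, hprod⟩ := Submonoid.exists_list_of_mem_closure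
    (mem_closure_of_tnn n A hTNN.tnn hinv.ne_zero)
  exact ⟨l.length, l.get, fun m => hl _ (List.get_mem l m), by rw [List.ofFn_get, hprod]⟩
end

section
/- Let n ≥ 2, i ∈ {1,…,n−1}, α ∈ ℝ_{>0}^i and d ∈ ℝ_{>0}^n. Set T = ℓ₁(α₁)·ℓ₂(α₂)⋯ℓ_i(α_i) and R = diag(d) + ε. If the product R·T admits an LU factorization R·T = L'·R' with L' ∈ N₋ and R' ∈ B₊, then L' has the same structure as T, i.e. L' = ℓ₁(β₁)·ℓ₂(β₂)⋯ℓ_i(β_i) for some β ∈ ℝ^i (so L' is lower bidiagonal unipotent with (L')_{j+1,j} = 0 for all j > i), and R' has the same structure as R, i.e. R' is upper bidiagonal with ones on its superdiagonal. -/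
/-!
The product `T = ℓ₁(α₁)⋯ℓ_i(α_i)` is `1 + ∑ α_k E_{k+1,k}` because the cross terms
`E_{k+1,k} E_{m+1,m}` with `k < m` vanish (`elemL_prod_apply`). Hence `M = R·T` is tridiagonal, with
ones on the superdiagonal and zeros below the diagonal in the columns beyond the `i`-th. An LU
factorization inherits this pattern. Comparing entries of `M = L'·R'` column by column, and using
that the diagonal entries of `R'` are nonzero, every position below the diagonal where all entries
of `M` to the left in the same row (itself included) vanish is a zero of `L'`. Comparing entries row
by row, `R'` agrees with `M` above the diagonal, since the entries of `R'` higher up in the same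
column are already known to vanish.
-/

open Matrix

/-- `ε`: ones on the superdiagonal, zeros elsewhere. -/
def epsMat (n : ℕ) : Matrix (Fin n) (Fin n) ℝ :=
  fun p q => if (p : ℕ) + 1 = (q : ℕ) then 1 else 0

/-- Upper bidiagonal matrices with ones on the superdiagonal. -/
def IsUpperBidiagOne {n : ℕ} (M : Matrix (Fin n) (Fin n) ℝ) : Prop :=
  (∀ p q : Fin n, (p : ℕ) + 1 = (q : ℕ) → M p q = 1) ∧
  (∀ p q : Fin n, (p : ℕ) ≠ (q : ℕ) → (p : ℕ) + 1 ≠ (q : ℕ) → M p q = 0)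

lemma elemL_apply (n k : ℕ) (a : ℝ) (p q : Fin n) :
    elemL n k a p q =
      (if p = q then 1 else 0) + (if (p : ℕ) = k + 1 ∧ (q : ℕ) = k then a else 0) :=
  rfl

lemma elemL_prod_apply {n : ℕ} (a : ℕ → ℝ) (i : ℕ) (p q : Fin n) :
    ((List.range i).map (fun k => elemL n k (a (k + 1)))).prod p q =
      (if p = q then 1 else 0) +
        (if (p : ℕ) = (q : ℕ) + 1 ∧ (q : ℕ) < i then a ((q : ℕ) + 1) else 0) := by
  induction i generalizing p q with
  | zero => simp [Matrix.one_apply]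
  | succ i ih =>
    rw [List.range_succ, List.map_append, List.prod_append, List.map_singleton,
      List.prod_singleton, Matrix.mul_apply]
    simp only [elemL_apply, mul_add, Finset.sum_add_distrib]
    have h1 : ∑ k : Fin n, ((List.range i).map (fun k => elemL n k (a (k + 1)))).prod p k *
        (if k = q then 1 else 0) =
        ((List.range i).map (fun k => elemL n k (a (k + 1)))).prod p q := by
      simp
    -- Column `i + 1` of the partial product is still a column of the identity.
    have h2 : ∑ k : Fin n, ((List.range i).map (fun k => elemL n k (a (k + 1)))).prod p k *
        (if (k : ℕ) = i + 1 ∧ (q : ℕ) = i then a (i + 1) else 0) =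
        if (p : ℕ) = i + 1 ∧ (q : ℕ) = i then a (i + 1) else 0 := by
      rw [Finset.sum_eq_single p]
      · rw [ih]
        by_cases h : (p : ℕ) = i + 1 ∧ (q : ℕ) = i
        · simp [h]
        · simp [h]
      · intro k _ hk
        rw [ih]
        by_cases h : (k : ℕ) = i + 1 ∧ (q : ℕ) = i
        · have h3 : ¬ ((p : ℕ) = (k : ℕ) + 1 ∧ (k : ℕ) < i) := by omega
          simp [h3, Ne.symm hk]
        · simp [h]
      · simp
    rw [h1, h2, ih, add_assoc]
    congr 1
    by_cases hq : (q : ℕ) = i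
    · simp [hq]
    · have : (q : ℕ) < i + 1 ↔ (q : ℕ) < i := by omega
      simp [hq, this]

/-- Zero pattern of `L` in `M = L·R`: zeros of `M` propagate to `L` from left to right along rows. -/
lemma lower_zero {n : ℕ} (i : ℕ) {M L R : Matrix (Fin n) (Fin n) ℝ}
    (hR : IsUpperTriReg R) (h : M = L * R)
    (hM : ∀ p q : Fin n, (q : ℕ) + 1 < p ∨ ((q : ℕ) + 1 = p ∧ i ≤ q) → M p q = 0)
    (p q : Fin n) (hpq : (q : ℕ) + 1 < p ∨ ((q : ℕ) + 1 = p ∧ i ≤ q)) : L p q = 0 := by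
  have hdet : ∀ k, R k k ≠ 0 := by
    have hu := hR.2
    rw [Matrix.det_of_isUpperTriangular (fun a b hab => hR.1 a b hab), isUnit_iff_ne_zero,
      Finset.prod_ne_zero_iff] at hu
    exact fun k => hu k (Finset.mem_univ k)
  induction q using WellFoundedLT.induction with
  | ind q ih =>
    have hz := hM p q hpq
    rw [h, Matrix.mul_apply, Finset.sum_eq_single q] at hz
    · exact (mul_eq_zero.mp hz).resolve_right (hdet q)
    · intro k _ hk
      rcases lt_or_gt_of_ne hk with hlt | hgt
      · rw [ih k hlt (by have : (k : ℕ) < q := hlt; omega), zero_mul]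
      · rw [hR.1 k q hgt, mul_zero]
    · simp

/-- If `M` vanishes above its superdiagonal, the factor `R` agrees with `M` above the diagonal. -/
lemma upper_eq {n : ℕ} {M L R : Matrix (Fin n) (Fin n) ℝ}
    (hL : IsLowerUnipotent L) (h : M = L * R)
    (hM : ∀ p q : Fin n, (p : ℕ) + 1 < q → M p q = 0)
    (p q : Fin n) (hpq : p < q) : R p q = M p q := by
  induction p using WellFoundedLT.induction with
  | ind p ih =>
    rw [h, Matrix.mul_apply, Finset.sum_eq_single p]
    · rw [hL.1, one_mul]
    · intro k _ hk
      rcases lt_or_gt_of_ne hk with hlt | hgt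
      · have h1 : (k : ℕ) < p := hlt
        have h2 : (p : ℕ) < q := hpq
        rw [ih k hlt (hlt.trans hpq), hM k q (by omega), mul_zero]
      · rw [hL.2 p k hgt, zero_mul]
    · simp

/-- structure preservation of the LU factorization of `R·T` where
`T = ℓ₁(α₁)⋯ℓ_i(α_i)` and `R = diag(d) + ε`. -/
theorem statement6 (n : ℕ) (hn : 2 ≤ n) (i : ℕ) (hi1 : 1 ≤ i) (hi2 : i ≤ n - 1)
    (α : ℕ → ℝ) (hα : ∀ j, 1 ≤ j → j ≤ i → 0 < α j)
    (d : Fin n → ℝ) (hd : ∀ p, 0 < d p)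
    (L' R' : Matrix (Fin n) (Fin n) ℝ)
    (hL' : IsLowerUnipotent L') (hR' : IsUpperTriReg R')
    (hLU : (Matrix.diagonal d + epsMat n) *
        (((List.range i).map (fun k => elemL n k (α (k + 1)))).prod) = L' * R') :
    (∃ β : ℕ → ℝ, L' = ((List.range i).map (fun k => elemL n k (β (k + 1)))).prod) ∧
    IsUpperBidiagOne R' := by
  set T := ((List.range i).map (fun k => elemL n k (α (k + 1)))).prod with hT
  set M := (Matrix.diagonal d + epsMat n) * T with hMdef
  have hTa : ∀ p q, T p q = _ := elemL_prod_apply α i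
  have hMa : ∀ p q, M p q = d p * T p q + ∑ k, epsMat n p k * T k q := by
    intro p q
    rw [hMdef, add_mul, Matrix.add_apply, Matrix.diagonal_mul, Matrix.mul_apply]
  have hT0 : ∀ p q : Fin n, p ≠ q → ¬ ((p : ℕ) = (q : ℕ) + 1 ∧ (q : ℕ) < i) → T p q = 0 := by
    intro p q h1 h2
    rw [hTa, if_neg h1, if_neg h2, add_zero]
  have hMlow : ∀ p q : Fin n, (q : ℕ) + 1 < p ∨ ((q : ℕ) + 1 = p ∧ i ≤ q) → M p q = 0 := by
    intro p q h
    rw [hMa, hT0 p q (by rintro rfl; omega) (by omega), mul_zero, zero_add]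
    refine Finset.sum_eq_zero fun k _ => ?_
    by_cases hk : (p : ℕ) + 1 = k
    · rw [hT0 k q (by rintro rfl; omega) (by omega), mul_zero]
    · simp [epsMat, hk]
  have hMup : ∀ p q : Fin n, (p : ℕ) + 1 < q → M p q = 0 := by
    intro p q h
    rw [hMa, hT0 p q (by rintro rfl; omega) (by omega), mul_zero, zero_add]
    refine Finset.sum_eq_zero fun k _ => ?_
    by_cases hk : (p : ℕ) + 1 = k
    · rw [hT0 k q (by rintro rfl; omega) (by omega), mul_zero]
    · simp [epsMat, hk]
  have hMone : ∀ p q : Fin n, (p : ℕ) + 1 = q → M p q = 1 := by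
    intro p q h
    rw [hMa, hT0 p q (by rintro rfl; omega) (by omega), mul_zero, zero_add,
      Finset.sum_eq_single q]
    · rw [hTa]
      simp [epsMat, h]
    · intro k _ hk
      have : (p : ℕ) + 1 ≠ k := fun h' => hk (Fin.ext (by omega))
      simp [epsMat, this]
    · simp
  have hLz := lower_zero i hR' hLU hMlow
  have hRu := upper_eq hL' hLU hMup
  obtain ⟨β, hβ⟩ : ∃ β : ℕ → ℝ, ∀ p q : Fin n, (p : ℕ) = (q : ℕ) + 1 →
      β ((q : ℕ) + 1) = L' p q := by
    refine ⟨fun j => if h : 1 ≤ j ∧ j < n then L' ⟨j, h.2⟩ ⟨j - 1, by omega⟩ else 0, ?_⟩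
    intro p q h
    have hlt : 1 ≤ (q : ℕ) + 1 ∧ (q : ℕ) + 1 < n := by have := p.2; omega
    have hp : p = ⟨(q : ℕ) + 1, hlt.2⟩ := Fin.ext h
    simp [hlt.2, hp]
  refine ⟨⟨β, ?_⟩, ?_, ?_⟩
  · ext p q
    rw [elemL_prod_apply]
    rcases lt_trichotomy p q with h | h | h
    · have h' : (p : ℕ) < q := h
      rw [hL'.2 p q h, if_neg h.ne, if_neg (by omega), add_zero]
    · subst h
      rw [hL'.1, if_pos rfl, if_neg (by omega), add_zero]
    · have h' : (q : ℕ) < p := h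
      rw [if_neg h.ne', zero_add]
      by_cases hc : (p : ℕ) = (q : ℕ) + 1 ∧ (q : ℕ) < i
      · rw [if_pos hc, hβ p q hc.1]
      · rw [if_neg hc]
        exact hLz p q (by omega)
  · intro p q h
    rw [hRu p q (Fin.lt_def.mpr (by omega)), hMone p q h]
  · intro p q h1 h2
    rcases lt_or_gt_of_ne h1 with h | h
    · rw [hRu p q h, hMup p q (by omega)]
    · exact hR'.1 p q h
end

section
/- Let n ≥ 2, let u = (u_i^j)_{1≤i≤j≤n−1} be a triangular array of positive reals, set L = T₁(u)·T₂(u)⋯T_{n−1}(u), and let R ∈ 𝓑^{>0}. Suppose matrices R^{(0)}, R^{(1)}, …, R^{(n−1)} ∈ 𝓑 and lower unipotent matrices S₁, …, S_{n−1}, each of the form S_i = ℓ₁(β₁^i)·ℓ₂(β₂^i)⋯ℓ_{n−i}(β_{n−i}^i), satisfy R^{(0)} = R and S_i·R^{(i)} = R^{(i−1)}·T_i(u) for all i = 1,…,n−1. Then (S₁·S₂⋯S_{n−1})·R^{(n−1)} = R·L, so that L⁺ := S₁⋯S_{n−1} and R⁺ := R^{(n−1)} give an LU factorization of R·L realizing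 one time step of the discrete full Kostant–Toda map; moreover for each i the matrices R^{(i)} and R^{(i−1)} agree in every entry (k,l) with k ≥ n−i+2 and l ≥ n−i+2, so that each sub-step S_i·R^{(i)} = R^{(i−1)}·T_i(u) reduces to a tridiagonal discrete Toda (LR) step on the leading (n−i+1)×(n−i+1) blocks. -/
/-!
The first claim telescopes: moving `R^{(0)}` through `T₁, T₂, …` one factor at a time turns
`R·T₁⋯T_m` into `S₁⋯S_m·R^{(m)}`.

For the second claim, put `m = n - i`. Both `S_i` and `T_i` are products of `ℓ₁, …, ℓ_m`, which
only involve the first `m + 1` coordinates, so (0-indexed) their rows and columns of index `> m`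
are those of the identity (`elemL_prod_row`, `elemL_prod_col`). Reading `S_i·R^{(i)} = R^{(i-1)}·T_i`
at an entry `(p, q)` with `p, q > m` therefore gives `R^{(i)} p q = R^{(i-1)} p q`.
-/

open Matrix

/-- Members of `𝓑^{>0}`: upper bidiagonal with ones on the superdiagonal and
positive diagonal entries. -/
def IsBpos {n : ℕ} (M : Matrix (Fin n) (Fin n) ℝ) : Prop :=
  IsUpperBidiagOne M ∧ ∀ p : Fin n, 0 < M p p

lemma elemL_prod_row (n m : ℕ) (f : ℕ → ℝ) (p q : Fin n) (hp : m < (p : ℕ)) :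
    ((List.range m).map (fun k => elemL n k (f k))).prod p q = if p = q then 1 else 0 := by
  induction m generalizing p q with
  | zero => simp [Matrix.one_apply]
  | succ m ih =>
    have h : ¬ (p : ℕ) = m + 1 := by omega
    rw [List.range_succ, List.map_append, List.prod_append, Matrix.mul_apply]
    simp [ih p _ (by omega), elemL, h]

lemma elemL_prod_col (n m : ℕ) (f : ℕ → ℝ) (p q : Fin n) (hq : m < (q : ℕ)) :
    ((List.range m).map (fun k => elemL n k (f k))).prod p q = if p = q then 1 else 0 := by
  induction m generalizing p q with
  | zero => simp [Matrix.one_apply]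
  | succ m ih =>
    have h : ¬ (q : ℕ) = m := by omega
    rw [List.range_succ, List.map_append, List.prod_append, Matrix.mul_apply]
    simp [elemL, h, ih p q (by omega)]

/-- the sub-steps `S_i·R^{(i)} = R^{(i−1)}·T_i(u)` assemble into one time
step of the discrete full Kostant–Toda map, and each sub-step only changes the leading
block. -/
theorem statement7 (n : ℕ) (hn : 2 ≤ n)
    (u : ℕ → ℕ → ℝ) (hu : PosTriangle n u)
    (R : Matrix (Fin n) (Fin n) ℝ) (hR : IsBpos R)
    (Rs : ℕ → Matrix (Fin n) (Fin n) ℝ)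
    (hRsB : ∀ i, i ≤ n - 1 → IsUpperBidiagOne (Rs i))
    (hRs0 : Rs 0 = R)
    (S : ℕ → Matrix (Fin n) (Fin n) ℝ)
    (hSform : ∀ i, 1 ≤ i → i ≤ n - 1 →
      ∃ β : ℕ → ℝ, S i = ((List.range (n - i)).map (fun k => elemL n k (β (k + 1)))).prod)
    (hstep : ∀ i, 1 ≤ i → i ≤ n - 1 → S i * Rs i = Rs (i - 1) * Tmat n u i) :
    -- the sub-steps compose to an LU factorization of `R·L`
    (((List.range (n - 1)).map (fun i => S (i + 1))).prod) * Rs (n - 1) = R * Lmat n u ∧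
    -- each sub-step leaves the trailing block unchanged: entries `(k,l)` (1-indexed)
    -- with `k, l ≥ n−i+2` agree in `R^{(i)}` and `R^{(i−1)}`
    (∀ i, 1 ≤ i → i ≤ n - 1 → ∀ p q : Fin n,
      n - i + 1 ≤ (p : ℕ) → n - i + 1 ≤ (q : ℕ) → Rs i p q = Rs (i - 1) p q) := by
  refine ⟨?_, ?_⟩
  · have key : ∀ m, m ≤ n - 1 →
        ((List.range m).map (fun i => S (i + 1))).prod * Rs m =
          R * ((List.range m).map (fun i => Tmat n u (i + 1))).prod := by
      intro m
      induction m with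
      | zero => intro _; simp [hRs0]
      | succ m ih =>
        intro hm
        have hs := hstep (m + 1) (by omega) hm
        rw [Nat.add_sub_cancel] at hs
        simp only [List.range_succ, List.map_append, List.prod_append, List.map_cons,
          List.map_nil, List.prod_singleton]
        rw [Matrix.mul_assoc, hs, ← Matrix.mul_assoc, ih (by omega), Matrix.mul_assoc]
    exact key (n - 1) le_rfl
  · intro i h1 h2 p q hp hq
    obtain ⟨β, hβ⟩ := hSform i h1 h2
    have h := congrFun (congrFun (hstep i h1 h2) p) q
    rw [Matrix.mul_apply, Matrix.mul_apply] at h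
    have hS : ∀ j, S i p j = if p = j then 1 else 0 := fun j => by
      rw [hβ]; exact elemL_prod_row n (n - i) (fun k => β (k + 1)) p j (by omega)
    have hT : ∀ j, Tmat n u i j q = if j = q then 1 else 0 := fun j =>
      elemL_prod_col n (n - i) (fun k => u (k + 1) (i + k)) j q (by omega)
    simpa [hS, hT] using h
end
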